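/- arXiv:2604.25729 — 3 statements merged into one kernel-verified Lean document; each statement's English description precedes it below -/
import Mathlib

section
/- Let n ≥ 1 be an integer, d a nonnegative integer, and f ∈ ℂ[y_i^{±1} : 1 ≤ i ≤ n] a symmetric Laurent polynomial (invariant under all permutations of y_1,…,y_n) such that (y_1⋯y_n)^d · f(y) is a polynomial. Then there exists a unique analytic function F on the open set ℂ³∖Â_n such that F(α,β,γ) = S_n[f](α,β,γ) for every (α,β,γ) ∉ Â_n with Re α > d−1, Re β > −1 and Re γ > 0; that is, S_n[f] admits a unique analytic continuation to ℂ³∖Â_n. -/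
open MeasureTheory Complex

noncomputable section

/-- The open ordered simplex `Δ_n = {y : 1 > y_1 > ⋯ > y_n > 0}`. -/
def orderedSimplex (n : ℕ) : Set (Fin n → ℝ) :=
  {y | (∀ i, 0 < y i ∧ y i < 1) ∧ ∀ i j : Fin n, i < j → y j < y i}

/-- Evaluation of the Laurent polynomial with coefficient family `c` at a real point. -/
def laurentEval {n : ℕ} (c : (Fin n → ℤ) →₀ ℂ) (y : Fin n → ℝ) : ℂ :=
  c.sum fun k a => a * ∏ i, ((y i : ℂ)) ^ (k i)

/-- The Selberg integrand `∏ y_i^α (1-y_i)^β ∏_{i<j} (y_i-y_j)^{2γ} · f(y)`. -/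
def selbergIntegrand (n : ℕ) (f : (Fin n → ℝ) → ℂ) (α β γ : ℂ) (y : Fin n → ℝ) : ℂ :=
  (∏ i, ((y i : ℂ) ^ α * (((1 - y i : ℝ)) : ℂ) ^ β)) *
    (∏ i : Fin n, ∏ j : Fin n,
      if i < j then (((y i - y j : ℝ)) : ℂ) ^ (2 * γ) else 1) * f y

/-- The Selberg integral `S_n[f](α,β,γ)`. -/
def selbergS (n : ℕ) (f : (Fin n → ℝ) → ℂ) (α β γ : ℂ) : ℂ :=
  ∫ y in orderedSimplex n, selbergIntegrand n f α β γ y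

/-- The refined hyperplane arrangement `Â_n ⊂ ℂ³` of Sussman. -/
def setAhat (n : ℕ) : Set (ℂ × ℂ × ℂ) :=
  {p | (∃ j : ℕ, 1 ≤ j ∧ j ≤ n ∧
          ((∃ m : ℤ, p.1 + ((j : ℂ) - 1) * p.2.2 = m) ∨
           (∃ m : ℤ, p.2.1 + ((j : ℂ) - 1) * p.2.2 = m))) ∨
       (∃ j : ℕ, 1 ≤ j ∧ j ≤ n - 1 ∧ ∃ m : ℤ, ((j : ℂ) + 1) * p.2.2 = m)}

/-!
Over the unit cube, the polynomials whose integral against the Selberg weight vanishes include, by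
symmetry and by integration by parts, all differences `f - s_{ij} f` and all values of a
Dunkl-type operator conjugated by the weight `∏ y_i ^ α * (1 - y_i) ^ β`. Modulo such polynomials

* `∏ (α + 1 + m γ) * f` is congruent to a multiple of `∏ y_i` and, by the reflection
  `y_i ↦ 1 - y_i`, `∏ (β + 1 + m γ) * f` is congruent to a multiple of `∏ (1 - y_i)`, where
  `0 ≤ m < n`;
* `c * (∏ y_i * (1 - y_i)) ^ M * f` is congruent to a multiple of `D ^ 2`, where
  `D = ∏_{i ≠ j} (y_i - y_j)` and the constant `c` is obtained by applying a product of `M` Dunkl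
  operators to `D ^ 2`. For a suitable product `c` is nonzero, since no nonconstant polynomial is
  annihilated by all Dunkl operators when `(j + 1) γ` is never an integer.

Multiplication by `∏ y_i`, `∏ (1 - y_i)` and `D ^ 2` amounts to raising `α` by one, `β` by one and
`γ` by two. So off the arrangement the integral is locally expressed through integrals at shifted
parameters, and iterating enlarges the domain of analyticity to everything off the arrangement. The
local expressions agree by the identity theorem, because a diagonal complex line `p + t (1, 1, 1)`
meets the arrangement in a countable set and eventually enters the domain of convergence.

A symmetric Laurent polynomial is brought to this setting by clearing denominators and replacing the
ordered simplex by the cube, at the cost of a factor `n!`.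
-/

namespace Selberg

open MvPolynomial

section MvPolynomial

variable {ι K : Type*} [CommRing K]

lemma X_sub_X_ne_zero [Nontrivial K] {i j : ι} (h : i ≠ j) : (X i - X j : MvPolynomial ι K) ≠ 0 :=
  sub_ne_zero.2 fun h' => h (X_injective h')

lemma C_mul_mem {N : Submodule K (MvPolynomial ι K)} (c : K) {f : MvPolynomial ι K}
    (hf : f ∈ N) : C c * f ∈ N :=
  C_mul' (a := c) (p := f) ▸ N.smul_mem c hf

lemma pderiv_prod_eq_zero {i : ι} {s : Finset ι}
    {u : ι → MvPolynomial ι K} (hu : ∀ j ∈ s, pderiv i (u j) = 0) :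
    pderiv i (∏ j ∈ s, u j) = 0 :=
  Finset.prod_induction u (fun f => pderiv i f = 0)
    (fun f g hf hg => by rw [Derivation.leibniz, hf, hg, smul_zero, smul_zero, add_zero])
    (Derivation.map_one_eq_zero _) hu

end MvPolynomial

section DividedDifference

variable {ι K : Type*} [DecidableEq ι] [CommRing K]

/-- The automorphism of the polynomial ring exchanging the variables `X i` and `X j`. -/
def swapVars (i j : ι) : MvPolynomial ι K →ₐ[K] MvPolynomial ι K :=
  rename (Equiv.swap i j)

lemma swapVars_X (i j k : ι) : swapVars i j (X k : MvPolynomial ι K) = X (Equiv.swap i j k) :=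
  rename_X _ _

lemma swapVars_self (i : ι) (f : MvPolynomial ι K) : swapVars i i f = f := by
  rw [swapVars, Equiv.swap_self, Equiv.coe_refl, rename_id_apply]

lemma swapVars_swapVars (i j : ι) (f : MvPolynomial ι K) : swapVars i j (swapVars i j f) = f := by
  have h : ⇑(Equiv.swap i j) ∘ ⇑(Equiv.swap i j) = id := by ext k; simp
  rw [swapVars, rename_rename, h, rename_id_apply]

lemma X_sub_X_dvd_sub_swapVars (i j : ι) (f : MvPolynomial ι K) :
    X i - X j ∣ f - swapVars i j f := by
  induction f using MvPolynomial.induction_on with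
  | C a => simp [swapVars]
  | add p q hp hq => simpa [add_sub_add_comm] using dvd_add hp hq
  | mul_X p k hp =>
    have hk : X i - X j ∣ (X k - X (Equiv.swap i j k) : MvPolynomial ι K) := by
      rw [Equiv.swap_apply_def]
      split_ifs with hki hkj
      · rw [hki]
      · rw [hkj, ← neg_sub (X i), dvd_neg]
      · simp
    have h : p * X k - swapVars i j (p * X k) =
        (p - swapVars i j p) * X k + swapVars i j p * (X k - X (Equiv.swap i j k)) := by
      rw [map_mul, swapVars_X]; ring
    exact h ▸ dvd_add (hp.mul_right _) (hk.mul_left _)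

lemma swapVars_prod_X {s : Finset ι} {i j : ι} (h : i ∈ s ↔ j ∈ s) :
    swapVars i j (∏ k ∈ s, X k : MvPolynomial ι K) = ∏ k ∈ s, X k := by
  simp_rw [map_prod, swapVars_X]
  refine Finset.prod_equiv (Equiv.swap i j) (fun k => ?_) fun _ _ => rfl
  rw [Equiv.swap_apply_def]
  split_ifs with hi hj
  · rw [hi, h]
  · rw [hj, h]
  · rfl

variable [IsDomain K]

/-- The divided difference `(f - s_{ij} f) / (X i - X j)`, where `s_{ij}` exchanges `X i` and
`X j`. By convention it vanishes for `i = j`, so that sums over `j` need not exclude `i`. -/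
def divDiff (i j : ι) : Module.End K (MvPolynomial ι K) where
  toFun f := if i = j then 0 else (X_sub_X_dvd_sub_swapVars i j f).choose
  map_add' f g := by
    split_ifs with h
    · rw [add_zero]
    · refine mul_left_cancel₀ (X_sub_X_ne_zero (K := K) h) ?_
      rw [mul_add, ← (X_sub_X_dvd_sub_swapVars i j (f + g)).choose_spec,
        ← (X_sub_X_dvd_sub_swapVars i j f).choose_spec,
        ← (X_sub_X_dvd_sub_swapVars i j g).choose_spec, map_add, add_sub_add_comm]
  map_smul' c f := by
    split_ifs with h
    · rw [smul_zero]
    · refine mul_left_cancel₀ (X_sub_X_ne_zero (K := K) h) ?_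
      rw [RingHom.id_apply, mul_smul_comm, ← (X_sub_X_dvd_sub_swapVars i j (c • f)).choose_spec,
        ← (X_sub_X_dvd_sub_swapVars i j f).choose_spec, map_smul, smul_sub]

lemma divDiff_self (i : ι) (f : MvPolynomial ι K) : divDiff i i f = 0 := if_pos rfl

lemma X_sub_X_mul_divDiff (i j : ι) (f : MvPolynomial ι K) :
    (X i - X j) * divDiff i j f = f - swapVars i j f := by
  rcases eq_or_ne i j with rfl | h
  · rw [swapVars_self, sub_self, sub_self, zero_mul]
  · simpa [divDiff, h] using (X_sub_X_dvd_sub_swapVars i j f).choose_spec.symm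

lemma divDiff_eq_of_mul_eq {i j : ι} (h : i ≠ j) {f g : MvPolynomial ι K}
    (hg : (X i - X j) * g = f - swapVars i j f) : divDiff i j f = g :=
  mul_left_cancel₀ (X_sub_X_ne_zero h) (by rw [X_sub_X_mul_divDiff, hg])

lemma map_divDiff {K' : Type*} [CommRing K'] [IsDomain K'] (φ : K →+* K') (i j : ι)
    (f : MvPolynomial ι K) : map φ (divDiff i j f) = divDiff i j (map φ f) := by
  rcases eq_or_ne i j with rfl | h
  · simp only [divDiff_self, map_zero]
  · have := congrArg (map φ) (X_sub_X_mul_divDiff i j f)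
    simp only [map_sub, map_mul, map_X, swapVars, map_rename] at this
    exact (divDiff_eq_of_mul_eq h this).symm

lemma swapVars_divDiff (i j : ι) (f : MvPolynomial ι K) :
    swapVars i j (divDiff i j f) = divDiff i j f := by
  rcases eq_or_ne i j with rfl | h
  · exact swapVars_self _ _
  · have := congrArg (swapVars i j) (X_sub_X_mul_divDiff i j f)
    simp only [map_mul, map_sub, swapVars_swapVars, swapVars_X, Equiv.swap_apply_left,
      Equiv.swap_apply_right] at this
    exact (divDiff_eq_of_mul_eq h (by linear_combination -this)).symm

lemma divDiff_mul (i j : ι) (f g : MvPolynomial ι K) :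
    divDiff i j (f * g) = divDiff i j f * g + swapVars i j f * divDiff i j g := by
  rcases eq_or_ne i j with rfl | h
  · simp only [divDiff_self, zero_mul, mul_zero, add_zero]
  · refine divDiff_eq_of_mul_eq h ?_
    rw [map_mul]
    linear_combination g * X_sub_X_mul_divDiff i j f + swapVars i j f * X_sub_X_mul_divDiff i j g

lemma divDiff_eq_zero {i j : ι} {f : MvPolynomial ι K} (hf : swapVars i j f = f) :
    divDiff i j f = 0 := by
  rcases eq_or_ne i j with rfl | h
  · exact divDiff_self _ _
  · exact divDiff_eq_of_mul_eq h (by rw [hf, mul_zero, sub_self])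

lemma divDiff_mul_of_swapVars_eq {i j : ι} {f : MvPolynomial ι K} (hf : swapVars i j f = f)
    (g : MvPolynomial ι K) : divDiff i j (f * g) = f * divDiff i j g := by
  rw [divDiff_mul, divDiff_eq_zero hf, hf, zero_mul, zero_add]

lemma divDiff_X_self {i j : ι} (h : i ≠ j) : divDiff i j (X i : MvPolynomial ι K) = 1 :=
  divDiff_eq_of_mul_eq h (by rw [swapVars_X, Equiv.swap_apply_left, mul_one])

end DividedDifference

section WallProd

variable (ι K : Type*) [Fintype ι] [CommRing K]

/-- The product `∏ X_i * (1 - X_i)` of the equations of the walls of the unit cube. -/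
def wallProd : MvPolynomial ι K := ∏ i, X i * (1 - X i)

variable {ι K}

lemma swapVars_wallProd [DecidableEq ι] (i j : ι) :
    swapVars i j (wallProd ι K) = wallProd ι K := by
  simp only [wallProd, map_prod, map_mul, map_sub, map_one, swapVars_X]
  exact Equiv.prod_comp (Equiv.swap i j) fun k => (X k * (1 - X k) : MvPolynomial ι K)

lemma exists_wallProd_eq_mul (i : ι) :
    ∃ r : MvPolynomial ι K, wallProd ι K = r * (X i * (1 - X i)) ∧ pderiv i r = 0 := by
  classical
  refine ⟨∏ j ∈ Finset.univ.erase i, X j * (1 - X j), ?_, pderiv_prod_eq_zero fun j hj => ?_⟩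
  · rw [wallProd, Finset.prod_erase_mul _ _ (Finset.mem_univ i)]
  · simp [Derivation.leibniz, pderiv_X, Finset.ne_of_mem_erase hj]

lemma mul_pderiv_wallProd (i : ι) :
    X i * (1 - X i) * pderiv i (wallProd ι K) = (1 - 2 * X i) * wallProd ι K := by
  obtain ⟨r, hr, hr'⟩ := exists_wallProd_eq_mul (K := K) i
  simp only [hr, Derivation.leibniz, hr', pderiv_X_self, map_sub, Derivation.map_one_eq_zero,
    smul_eq_mul]
  ring

lemma mul_pderiv_wallProd_pow (i : ι) (l : ℕ) :
    X i * (1 - X i) * pderiv i (wallProd ι K ^ l) =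
      l • ((1 - 2 * X i) * wallProd ι K ^ l) := by
  cases l with
  | zero => simp only [pow_zero, Derivation.map_one_eq_zero, mul_zero, zero_smul]
  | succ l =>
    rw [Derivation.leibniz_pow, Nat.add_sub_cancel, smul_eq_mul, mul_smul_comm, pow_succ]
    congr 1
    linear_combination wallProd ι K ^ l * mul_pderiv_wallProd (K := K) i

end WallProd

section Dunkl

variable {ι K : Type*} [Fintype ι] [DecidableEq ι] [CommRing K] [IsDomain K]

/-- The rational Dunkl operator of type `A` with parameter `γ`, in the direction `i`. -/
def dunkl (γ : K) (i : ι) : Module.End K (MvPolynomial ι K) :=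
  (pderiv i).toLinearMap + γ • ∑ j, divDiff i j

lemma dunkl_apply (γ : K) (i : ι) (f : MvPolynomial ι K) :
    dunkl γ i f = pderiv i f + C γ * ∑ j, divDiff i j f := by
  rw [dunkl, C_mul', LinearMap.add_apply, LinearMap.smul_apply, LinearMap.sum_apply]
  rfl

lemma map_dunkl {K' : Type*} [CommRing K'] [IsDomain K'] (φ : K →+* K') (γ : K) (i : ι)
    (f : MvPolynomial ι K) : map φ (dunkl γ i f) = dunkl (φ γ) i (map φ f) := by
  simp only [dunkl_apply, map_add, map_mul, map_C, map_sum, pderiv_map, map_divDiff]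

lemma dunkl_mul (γ : K) (i : ι) (f g : MvPolynomial ι K) :
    dunkl γ i (f * g) = dunkl γ i f * g + f * dunkl γ i g -
      C γ * ∑ j, divDiff i j f * (g - swapVars i j g) := by
  have h : ∑ j, divDiff i j (f * g) = (∑ j, divDiff i j f) * g + f * ∑ j, divDiff i j g -
      ∑ j, divDiff i j f * (g - swapVars i j g) := by
    rw [Finset.sum_mul, Finset.mul_sum, ← Finset.sum_add_distrib, ← Finset.sum_sub_distrib]
    refine Finset.sum_congr rfl fun j _ => ?_
    rw [divDiff_mul]
    linear_combination divDiff i j g * X_sub_X_mul_divDiff i j f -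
      divDiff i j f * X_sub_X_mul_divDiff i j g
  simp only [dunkl_apply, h, Derivation.leibniz, smul_eq_mul]
  ring

lemma dunkl_mul_of_swapVars_eq (γ : K) {i : ι} {f : MvPolynomial ι K}
    (hf : ∀ j, swapVars i j f = f) (g : MvPolynomial ι K) :
    dunkl γ i (f * g) = pderiv i f * g + f * dunkl γ i g := by
  simp only [dunkl_apply, divDiff_mul_of_swapVars_eq (hf _), Derivation.leibniz, smul_eq_mul,
    ← Finset.mul_sum]
  ring

/-- The conjugate of the Dunkl operator by the weight `∏ X_k ^ α * (1 - X_k) ^ β`, applied to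
`X i * (1 - X i) * f`. The factor `X i * (1 - X i)` clears the denominators and removes the
boundary terms, so that these polynomials integrate to zero against the Selberg weight. -/
def weightedDunkl (α β γ : K) (i : ι) (f : MvPolynomial ι K) : MvPolynomial ι K :=
  dunkl γ i (X i * (1 - X i) * f) + (C α * (1 - X i) - C β * X i) * f

/-- A module of polynomials containing the differences `f - s_{ij} f` and the values of the
weighted Dunkl operators: the relations satisfied by integration against the Selberg weight. -/
structure IsRelationModule (N : Submodule K (MvPolynomial ι K)) (α β γ : K) : Prop where
  sub_swapVars_mem : ∀ i j f, f - swapVars i j f ∈ N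
  weightedDunkl_mem : ∀ i f, weightedDunkl α β γ i f ∈ N

variable {N : Submodule K (MvPolynomial ι K)} {α β γ : K}

lemma IsRelationModule.mem_of_swapVars_eq_neg (hN : IsRelationModule N α β γ)
    (h2 : IsUnit (2 : K)) {i j : ι} {f : MvPolynomial ι K} (hf : swapVars i j f = -f) :
    f ∈ N := by
  have h := hN.sub_swapVars_mem i j f
  rw [hf, sub_neg_eq_add, ← two_smul K] at h
  exact (N.smul_mem_iff_of_isUnit h2).1 h

lemma IsRelationModule.adjoint_mem (hN : IsRelationModule N α β γ) (h2 : IsUnit (2 : K)) (i : ι)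
    (f g : MvPolynomial ι K) :
    X i * (1 - X i) * f * dunkl γ i g + weightedDunkl α β γ i f * g ∈ N := by
  have h : X i * (1 - X i) * f * dunkl γ i g + weightedDunkl α β γ i f * g =
      weightedDunkl α β γ i (f * g) +
        C γ * ∑ j, divDiff i j (X i * (1 - X i) * f) * (g - swapVars i j g) := by
    rw [weightedDunkl, weightedDunkl, ← mul_assoc _ f g, dunkl_mul γ i (X i * (1 - X i) * f)]
    ring
  rw [h]
  refine N.add_mem (hN.weightedDunkl_mem _ _) (C_mul_mem _ (N.sum_mem fun j _ => ?_))
  refine hN.mem_of_swapVars_eq_neg h2 (i := i) (j := j) ?_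
  rw [map_mul, swapVars_divDiff, map_sub, swapVars_swapVars]
  ring

lemma weightedDunkl_wallProd_pow_mul (α β γ : K) (i : ι) (l : ℕ) (f : MvPolynomial ι K) :
    weightedDunkl α β γ i (wallProd ι K ^ l * f) =
      wallProd ι K ^ l * (weightedDunkl α β γ i f + l • ((1 - 2 * X i) * f)) := by
  have hswap (j : ι) : swapVars i j (wallProd ι K ^ l) = wallProd ι K ^ l := by
    rw [map_pow, swapVars_wallProd]
  rw [weightedDunkl, mul_left_comm, dunkl_mul_of_swapVars_eq γ hswap, weightedDunkl]
  linear_combination f * mul_pderiv_wallProd_pow (K := K) i l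

theorem IsRelationModule.exists_wallProd_pow_mul_dunkl_sub_mem (hN : IsRelationModule N α β γ)
    (h2 : IsUnit (2 : K)) (g : MvPolynomial ι K) (w : List ι) (f : MvPolynomial ι K) :
    ∃ h, wallProd ι K ^ w.length * f * (w.map (dunkl γ)).prod g - h * g ∈ N := by
  induction w generalizing f with
  | nil => exact ⟨f, by simp⟩
  | cons i w ih =>
    obtain ⟨r, hr, -⟩ := exists_wallProd_eq_mul (K := K) i
    obtain ⟨h, hh⟩ := ih (-(weightedDunkl α β γ i (r * f) +
      w.length • ((1 - 2 * X i) * (r * f))))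
    refine ⟨h, ?_⟩
    have hadj := hN.adjoint_mem h2 i (wallProd ι K ^ w.length * (r * f))
      ((w.map (dunkl γ)).prod g)
    rw [weightedDunkl_wallProd_pow_mul] at hadj
    convert N.add_mem hadj hh using 1
    rw [List.length_cons, pow_succ, List.map_cons, List.prod_cons, Module.End.mul_apply]
    nth_rewrite 2 [hr]
    ring

end Dunkl

section ProductShift

variable {ι K : Type*} [Fintype ι] [DecidableEq ι] [CommRing K] [IsDomain K]
  {N : Submodule K (MvPolynomial ι K)} {α β γ : K}

lemma IsRelationModule.exists_divDiff_prod_X_sub_mem (hN : IsRelationModule N α β γ)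
    {s : Finset ι} {i : ι} (hi : i ∉ s) (h : MvPolynomial ι K) (j : ι) :
    ∃ g, divDiff i j (X i * (1 - X i) * ((∏ k ∈ s, X k) * h)) -
      ((if j ∈ (insert i s)ᶜ then (∏ k ∈ s, X k) * h else 0) +
        (∏ k ∈ insert i s, X k) * g) ∈ N := by
  rw [Finset.prod_insert hi]
  set m : MvPolynomial ι K := ∏ k ∈ s, X k
  set D := divDiff i j ((1 - X i) * h)
  rcases eq_or_ne i j with rfl | hij
  · exact ⟨0, by simp [divDiff_self]⟩
  by_cases hj : j ∈ s
  · have hswap : swapVars i j (X i * m) = X i * m := by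
      rw [← Finset.prod_insert hi]
      exact swapVars_prod_X (by simp [hj])
    have hmul : X i * (1 - X i) * (m * h) = X i * m * ((1 - X i) * h) := by ring
    exact ⟨D, by simp [hmul, divDiff_mul_of_swapVars_eq hswap, hj, D]⟩
  · have hswap : swapVars i j m = m := swapVars_prod_X (by simp [hi, hj])
    have hmul : X i * (1 - X i) * (m * h) = m * (X i * ((1 - X i) * h)) := by ring
    refine ⟨D - h, ?_⟩
    rw [hmul, divDiff_mul_of_swapVars_eq hswap, divDiff_mul, divDiff_X_self hij, swapVars_X,
      Equiv.swap_apply_left, if_pos (by simp [hij.symm, hj])]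
    have hmem := hN.sub_swapVars_mem i j (X j * m * D)
    rw [map_mul, map_mul, swapVars_X, Equiv.swap_apply_right, hswap, swapVars_divDiff] at hmem
    convert hmem using 1
    ring

lemma IsRelationModule.exists_prod_X_sub_prod_insert_X_mem (hN : IsRelationModule N α β γ)
    {s : Finset ι} {i : ι} (hi : i ∉ s) (h : MvPolynomial ι K) :
    ∃ g, C (α + 1 + ((insert i s)ᶜ.card : K) * γ) * ((∏ k ∈ s, X k) * h) -
      (∏ k ∈ insert i s, X k) * g ∈ N := by
  choose g hg using hN.exists_divDiff_prod_X_sub_mem hi h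
  have hsum := N.sum_mem fun j (_ : j ∈ Finset.univ) => hg j
  rw [Finset.sum_sub_distrib, Finset.sum_add_distrib, Finset.sum_ite_mem, Finset.univ_inter,
    Finset.sum_const, ← Finset.mul_sum, nsmul_eq_mul] at hsum
  have hderiv : pderiv i (∏ k ∈ s, X k : MvPolynomial ι K) = 0 :=
    pderiv_prod_eq_zero fun j hj => pderiv_X_of_ne fun hji => hi (hji ▸ hj)
  refine ⟨C (2 + α + β) * h - (1 - X i) * pderiv i h - C γ * ∑ j, g j, ?_⟩
  convert N.sub_mem (hN.weightedDunkl_mem i ((∏ k ∈ s, X k) * h)) (C_mul_mem γ hsum) using 1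
  simp only [weightedDunkl, dunkl_apply, Finset.prod_insert hi, Derivation.leibniz, hderiv,
    pderiv_X_self, map_sub, map_add, map_mul, map_natCast, map_ofNat, map_one, smul_eq_mul,
    Derivation.map_one_eq_zero]
  ring

theorem IsRelationModule.exists_prod_X_shift_mem (hN : IsRelationModule N α β γ)
    (f : MvPolynomial ι K) :
    ∃ g, C (∏ m ∈ Finset.range (Fintype.card ι), (α + 1 + m * γ)) * f - (∏ i, X i) * g ∈ N := by
  suffices H : ∀ s : Finset ι, ∃ g,
      C (∏ m ∈ Finset.Ico sᶜ.card (Fintype.card ι), (α + 1 + m * γ)) * f -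
        (∏ i ∈ s, X i) * g ∈ N by
    simpa using H Finset.univ
  intro s
  induction s using Finset.induction_on with
  | empty => exact ⟨f, by simp⟩
  | insert i s hi ih =>
    obtain ⟨g, hg⟩ := ih
    obtain ⟨g', hg'⟩ := hN.exists_prod_X_sub_prod_insert_X_mem hi g
    have hcard : sᶜ.card = (insert i s)ᶜ.card + 1 := by
      rw [Finset.compl_insert, Finset.card_erase_add_one (by simpa using hi)]
    have hlt : (insert i s)ᶜ.card < Fintype.card ι := by
      have := sᶜ.card_le_univ
      omega
    refine ⟨g', ?_⟩
    rw [Finset.prod_eq_prod_Ico_succ_bot hlt, ← hcard]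
    convert N.add_mem (C_mul_mem (α + 1 + ((insert i s)ᶜ.card : K) * γ) hg) hg' using 1
    rw [C_mul]
    ring

end ProductShift

section Reflection

variable {ι K : Type*} [CommRing K]

/-- The reflection `X i ↦ 1 - X i`, which exchanges the two families of walls of the cube. -/
def reflect : MvPolynomial ι K →ₐ[K] MvPolynomial ι K := aeval fun i => 1 - X i

lemma reflect_X (i : ι) : reflect (X i : MvPolynomial ι K) = 1 - X i := aeval_X _ _

lemma reflect_C (c : K) : reflect (C c : MvPolynomial ι K) = C c := by
  rw [reflect, aeval_C, algebraMap_eq]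

lemma reflect_reflect (f : MvPolynomial ι K) : reflect (reflect f) = f := by
  have h : (reflect.comp reflect : MvPolynomial ι K →ₐ[K] _) = AlgHom.id K _ := by
    ext i : 1
    simp [reflect_X]
  exact DFunLike.congr_fun h f

lemma pderiv_reflect (i : ι) (f : MvPolynomial ι K) :
    pderiv i (reflect f) = -reflect (pderiv i f) := by
  classical
  induction f using MvPolynomial.induction_on with
  | C a => simp
  | add p q hp hq => rw [map_add, map_add, hp, hq, map_add, map_add, neg_add]
  | mul_X p k hp =>
    simp only [map_mul, reflect_X, Derivation.leibniz, hp, map_sub, Derivation.map_one_eq_zero,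
      pderiv_X, smul_eq_mul, map_add, zero_sub]
    rcases eq_or_ne k i with rfl | h
    · simp; ring
    · simp [h]

variable [DecidableEq ι]

lemma swapVars_reflect (i j : ι) (f : MvPolynomial ι K) :
    swapVars i j (reflect f) = reflect (swapVars i j f) := by
  have h : (swapVars i j).comp reflect =
      (reflect.comp (swapVars i j) : MvPolynomial ι K →ₐ[K] _) := by
    ext k : 1
    simp [reflect_X, swapVars_X]
  exact DFunLike.congr_fun h f

variable [IsDomain K]

lemma divDiff_reflect (i j : ι) (f : MvPolynomial ι K) :
    divDiff i j (reflect f) = -reflect (divDiff i j f) := by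
  rcases eq_or_ne i j with rfl | h
  · simp only [divDiff_self, map_zero, neg_zero]
  · refine divDiff_eq_of_mul_eq h ?_
    have := congrArg reflect (X_sub_X_mul_divDiff i j f)
    rw [map_mul, map_sub, map_sub, reflect_X, reflect_X] at this
    rw [swapVars_reflect, ← this]
    ring

variable [Fintype ι]

lemma dunkl_reflect (γ : K) (i : ι) (f : MvPolynomial ι K) :
    dunkl γ i (reflect f) = -reflect (dunkl γ i f) := by
  simp only [dunkl_apply, pderiv_reflect, divDiff_reflect, Finset.sum_neg_distrib, map_add,
    map_mul, map_sum, reflect_C]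
  ring

lemma weightedDunkl_reflect (α β γ : K) (i : ι) (f : MvPolynomial ι K) :
    weightedDunkl α β γ i (reflect f) = -reflect (weightedDunkl β α γ i f) := by
  have h : X i * (1 - X i) * reflect f = reflect (X i * (1 - X i) * f) := by
    simp only [map_mul, map_sub, map_one, reflect_X]
    ring
  rw [weightedDunkl, h, dunkl_reflect, weightedDunkl]
  simp only [map_add, map_mul _ _ f, map_sub, map_mul _ (C _), map_one, reflect_X, reflect_C]
  ring

lemma IsRelationModule.comap_reflect {N : Submodule K (MvPolynomial ι K)} {α β γ : K}
    (hN : IsRelationModule N α β γ) :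
    IsRelationModule (N.comap reflect.toLinearMap) β α γ where
  sub_swapVars_mem i j f := by
    simpa [swapVars_reflect] using hN.sub_swapVars_mem i j (reflect f)
  weightedDunkl_mem i f := by
    simpa [weightedDunkl_reflect] using hN.weightedDunkl_mem i (reflect f)

theorem IsRelationModule.exists_prod_one_sub_X_shift_mem {N : Submodule K (MvPolynomial ι K)}
    {α β γ : K} (hN : IsRelationModule N α β γ) (f : MvPolynomial ι K) :
    ∃ g, C (∏ m ∈ Finset.range (Fintype.card ι), (β + 1 + m * γ)) * f -
      (∏ i, (1 - X i)) * g ∈ N := by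
  obtain ⟨g, hg⟩ := hN.comap_reflect.exists_prod_X_shift_mem (reflect f)
  refine ⟨reflect g, ?_⟩
  simpa only [Submodule.mem_comap, AlgHom.toLinearMap_apply, map_sub, map_mul, reflect_C,
    reflect_reflect, map_prod, reflect_X] using hg

end Reflection

section Coefficients

variable {ι K : Type*} [DecidableEq ι]

/-- The exponent obtained from `μ` by exchanging its entries at `i` and `j`. -/
def swapExp (i j : ι) (μ : ι →₀ ℕ) : ι →₀ ℕ := μ.mapDomain (Equiv.swap i j)

lemma swapExp_apply (i j k : ι) (μ : ι →₀ ℕ) : swapExp i j μ k = μ (Equiv.swap i j k) := by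
  rw [swapExp, Finsupp.mapDomain_equiv_apply, Equiv.symm_swap]

lemma swapExp_swapExp (i j : ι) (μ : ι →₀ ℕ) : swapExp i j (swapExp i j μ) = μ := by
  ext k
  rw [swapExp_apply, swapExp_apply, Equiv.swap_apply_self]

lemma degree_swapExp (i j : ι) (μ : ι →₀ ℕ) : (swapExp i j μ).degree = μ.degree := by
  rw [swapExp, Finsupp.degree_mapDomain]

lemma swapExp_add_single {i j : ι} {ρ : ι →₀ ℕ} (hi : ρ i = 0) (hj : ρ j = 0) (v : ℕ) :
    swapExp i j (ρ + Finsupp.single i v) = ρ + Finsupp.single j v := by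
  have hρ : swapExp i j ρ = ρ := by
    ext k
    rw [swapExp_apply, Equiv.swap_apply_def]
    split_ifs with hki hkj
    · rw [hki, hi, hj]
    · rw [hkj, hi, hj]
    · rfl
  rw [swapExp, Finsupp.mapDomain_add, Finsupp.mapDomain_single, Equiv.swap_apply_left]
  exact congrArg (· + _) hρ

variable [CommRing K]

lemma coeff_swapVars (i j : ι) (μ : ι →₀ ℕ) (f : MvPolynomial ι K) :
    coeff μ (swapVars i j f) = coeff (swapExp i j μ) f := by
  conv_lhs => rw [← swapExp_swapExp i j μ]
  exact coeff_rename_mapDomain _ (Equiv.injective _) _ _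

variable [IsDomain K]

lemma coeff_X_mul_divDiff_sub (i j : ι) (μ : ι →₀ ℕ) (f : MvPolynomial ι K) :
    coeff μ (X i * divDiff i j f) - coeff μ (X j * divDiff i j f) =
      coeff μ f - coeff (swapExp i j μ) f := by
  rw [← coeff_swapVars, ← coeff_sub, ← coeff_sub, ← sub_mul, X_sub_X_mul_divDiff]

lemma coeff_divDiff_of_apply_eq_zero {i j : ι} (h : i ≠ j) {ν : ι →₀ ℕ} (hν : ν j = 0)
    (f : MvPolynomial ι K) :
    coeff ν (divDiff i j f) =
      coeff (ν + Finsupp.single i 1) f - coeff (swapExp i j (ν + Finsupp.single i 1)) f := by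
  rw [← coeff_X_mul_divDiff_sub, add_comm ν, coeff_X_mul, coeff_X_mul', if_neg, sub_zero]
  simp [hν, h]

/-- The coefficient of `divDiff i j f` at `κ + e_i` differs from that at `κ + e_j` by
coefficients of `f`, so the vanishing propagates along a family `P` of exponents. -/
lemma coeff_divDiff_eq_zero {i j : ι} (h : i ≠ j) {f : MvPolynomial ι K}
    {P : (ι →₀ ℕ) → Prop} (hf : ∀ ν, P ν → coeff (ν + Finsupp.single j 1) f = 0)
    (hf' : ∀ ν, P ν → coeff (swapExp i j (ν + Finsupp.single j 1)) f = 0)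
    (hP : ∀ κ, P (κ + Finsupp.single i 1) → P (κ + Finsupp.single j 1)) (ν : ι →₀ ℕ)
    (hν : P ν) : coeff ν (divDiff i j f) = 0 := by
  have hstep (ν : ι →₀ ℕ) (hν : P ν) : coeff ν (divDiff i j f) =
      coeff (ν + Finsupp.single j 1) (X i * divDiff i j f) := by
    have := coeff_X_mul_divDiff_sub i j (ν + Finsupp.single j 1) f
    rw [hf ν hν, hf' ν hν, sub_zero, sub_eq_zero] at this
    rw [this, add_comm, coeff_X_mul]
  induction hk : ν i generalizing ν with
  | zero => rw [hstep ν hν, coeff_X_mul', if_neg (by simp [hk, h])]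
  | succ k ih =>
    obtain ⟨κ, rfl⟩ : ∃ κ : ι →₀ ℕ, ν = κ + Finsupp.single i 1 :=
      ⟨ν - Finsupp.single i 1, (tsub_add_cancel_of_le (by simp [hk])).symm⟩
    rw [hstep _ hν, add_right_comm, add_comm _ (Finsupp.single i 1), coeff_X_mul]
    exact ih _ (hP κ hν) (by simpa [h.symm] using hk)

lemma isHomogeneous_divDiff (i j : ι) {f : MvPolynomial ι K} {m : ℕ}
    (hf : f.IsHomogeneous (m + 1)) : (divDiff i j f).IsHomogeneous m := by
  rcases eq_or_ne i j with rfl | h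
  · exact divDiff_self i f ▸ isHomogeneous_zero ι K m
  have hcoeff : ∀ ν : ι →₀ ℕ, ν.degree ≠ m → coeff ν (divDiff i j f) = 0 :=
    coeff_divDiff_eq_zero h
      (fun ν hν => hf.coeff_eq_zero (by simpa using hν))
      (fun ν hν => hf.coeff_eq_zero (by simpa [degree_swapExp] using hν))
      (fun κ hκ => by simpa using hκ)
  intro ν hν
  refine (DFunLike.congr_fun Finsupp.degree_eq_weight_one ν).symm.trans ?_
  exact not_not.1 (mt (hcoeff ν) hν)

end Coefficients

section SumSq

variable {ι : Type*} [Fintype ι]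

/-- The sum of the squares of the entries of an exponent. Among exponents of given degree it is
a measure of how dominant they are. -/
def sumSq (μ : ι →₀ ℕ) : ℕ := ∑ k, μ k ^ 2

lemma sumSq_add_single (μ : ι →₀ ℕ) (i : ι) (c : ℕ) :
    sumSq (μ + Finsupp.single i c) = sumSq μ + 2 * c * μ i + c ^ 2 := by
  classical
  have h (k : ι) : (μ + Finsupp.single i c) k ^ 2 =
      μ k ^ 2 + if k = i then 2 * c * μ i + c ^ 2 else 0 := by
    rcases eq_or_ne k i with rfl | hk
    · simp; ring
    · simp [hk]
  simp only [sumSq, h, Finset.sum_add_distrib, Finset.sum_ite_eq', Finset.mem_univ, if_true]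
  ring

lemma sumSq_swapExp [DecidableEq ι] (i j : ι) (μ : ι →₀ ℕ) :
    sumSq (swapExp i j μ) = sumSq μ := by
  simp only [sumSq, swapExp_apply]
  exact Equiv.sum_comp (Equiv.swap i j) fun k => μ k ^ 2

lemma sumSq_pos {μ : ι →₀ ℕ} (h : μ ≠ 0) : 0 < sumSq μ := by
  obtain ⟨k, hk⟩ := Finsupp.ne_iff.1 h
  exact Finset.sum_pos' (fun _ _ => Nat.zero_le _)
    ⟨k, Finset.mem_univ k, pow_pos (Nat.pos_of_ne_zero hk) 2⟩

/-- The witness is an exponent of `f` with maximal sum of squares, split at a minimal nonzero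
entry. -/
lemma exists_sumSq_maximal {K : Type*} [CommRing K] {f : MvPolynomial ι K} {η : ι →₀ ℕ}
    (hη : η ≠ 0) (hηf : coeff η f ≠ 0) :
    ∃ (ρ : ι →₀ ℕ) (u : ℕ) (i : ι), ρ i = 0 ∧ (∀ j, ρ j = 0 ∨ u < ρ j) ∧
      (∀ μ, sumSq ρ + (u + 1) ^ 2 < sumSq μ → coeff μ f = 0) ∧
      coeff (ρ + Finsupp.single i (u + 1)) f ≠ 0 := by
  obtain ⟨η', hη'f, hmax⟩ :=
    Finset.exists_max_image f.support sumSq ⟨η, mem_support_iff.2 hηf⟩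
  have hη' : η' ≠ 0 := by
    rintro rfl
    exact ((sumSq_pos hη).trans_le (hmax η (mem_support_iff.2 hηf))).ne' (by simp [sumSq])
  obtain ⟨i, hi, hmin⟩ :=
    Finset.exists_min_image η'.support η' (Finsupp.support_nonempty_iff.2 hη')
  obtain ⟨u, hu⟩ := Nat.exists_eq_succ_of_ne_zero (Finsupp.mem_support_iff.1 hi)
  have hadd : η'.erase i + Finsupp.single i (u + 1) = η' := by
    rw [← Nat.succ_eq_add_one, ← hu, Finsupp.erase_add_single]
  have hsumSq : sumSq η' = sumSq (η'.erase i) + (u + 1) ^ 2 := by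
    rw [← hadd, sumSq_add_single, hadd, Finsupp.erase_same, mul_zero, add_zero]
  refine ⟨η'.erase i, u, i, Finsupp.erase_same, fun j => or_iff_not_imp_left.2 fun hj => ?_,
    fun μ hμ => ?_, hadd.symm ▸ mem_support_iff.1 hη'f⟩
  · have hji : j ≠ i := by
      rintro rfl
      exact hj Finsupp.erase_same
    rw [Finsupp.erase_ne hji] at hj ⊢
    exact (hu ▸ Nat.lt_succ_self u).trans_le (hmin j (Finsupp.mem_support_iff.2 hj))
  · by_contra h
    exact (hmax μ (mem_support_iff.2 h)).not_gt (hsumSq ▸ hμ)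

end SumSq

section LinearSystem

lemma eq_zero_of_mul_add_mul_sum_sub_eq_zero {ι K : Type*} [CommRing K] [IsDomain K] {v γ : K}
    {s : Finset ι} {x : ι → K} (hv : v ≠ 0) (hs : 2 ≤ s.card → v + γ * s.card ≠ 0)
    (hx : ∀ k ∈ s, v * x k + γ * ∑ j ∈ s, (x k - x j) = 0) {i : ι} (hi : i ∈ s) : x i = 0 := by
  simp only [Finset.sum_sub_distrib, Finset.sum_const, nsmul_eq_mul] at hx
  have hsum : ∑ k ∈ s, x k = 0 := by
    have h := Finset.sum_eq_zero hx
    rw [Finset.sum_add_distrib, ← Finset.mul_sum, ← Finset.mul_sum, Finset.sum_sub_distrib,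
      ← Finset.mul_sum, Finset.sum_const, nsmul_eq_mul, sub_self, mul_zero, add_zero] at h
    exact (mul_eq_zero.1 h).resolve_left hv
  by_cases hcard : 2 ≤ s.card
  · have h := hx i hi
    rw [hsum, sub_zero, ← mul_assoc, ← add_mul] at h
    exact (mul_eq_zero.1 h).resolve_left (hs hcard)
  · have hsi : s = {i} :=
      Finset.eq_singleton_iff_unique_mem.2
        ⟨hi, fun j hj => Finset.card_le_one.1 (by omega) j hj i hi⟩
    rwa [hsi, Finset.sum_singleton] at hsum

end LinearSystem

section SingularPolynomials

variable {ι K : Type*} [Fintype ι] [DecidableEq ι] [CommRing K] [IsDomain K]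

lemma coeff_divDiff_eq_zero_of_sumSq {i j : ι} {f : MvPolynomial ι K} {M : ℕ}
    (hf : ∀ μ, M < sumSq μ → coeff μ f = 0) {ν : ι →₀ ℕ} (hν : ν i < ν j)
    (hM : M ≤ sumSq (ν + Finsupp.single i 1)) : coeff ν (divDiff i j f) = 0 := by
  have h : i ≠ j := by rintro rfl; exact hν.false
  refine coeff_divDiff_eq_zero h
    (P := fun ν => ν i < ν j ∧ M ≤ sumSq (ν + Finsupp.single i 1)) ?_ ?_ ?_ ν ⟨hν, hM⟩
  · rintro ν ⟨hν, hM⟩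
    refine hf _ ?_
    rw [sumSq_add_single] at hM ⊢
    omega
  · rintro ν ⟨hν, hM⟩
    refine hf _ ?_
    rw [sumSq_swapExp]
    rw [sumSq_add_single] at hM ⊢
    omega
  · rintro κ ⟨hκ, hM⟩
    simp only [sumSq_add_single, Finsupp.add_apply, Finsupp.single_apply, h, h.symm, if_true,
      if_false] at hκ hM ⊢
    omega

lemma coeff_dunkl_of_sumSq_maximal (γ : K) {f : MvPolynomial ι K} {ρ : ι →₀ ℕ} {u : ℕ}
    (hρ : ∀ j, ρ j = 0 ∨ u < ρ j)
    (hf : ∀ μ, sumSq ρ + (u + 1) ^ 2 < sumSq μ → coeff μ f = 0) {k : ι} (hk : ρ k = 0) :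
    coeff (ρ + Finsupp.single k u) (dunkl γ k f) =
      (u + 1 : ℕ) * coeff (ρ + Finsupp.single k (u + 1)) f +
        γ * ∑ j with ρ j = 0, (coeff (ρ + Finsupp.single k (u + 1)) f -
          coeff (ρ + Finsupp.single j (u + 1)) f) := by
  have hadd : ρ + Finsupp.single k u + Finsupp.single k 1 = ρ + Finsupp.single k (u + 1) := by
    rw [add_assoc, ← Finsupp.single_add]
  have hD (j : ι) : coeff (ρ + Finsupp.single k u) (divDiff k j f) =
      if ρ j = 0 then coeff (ρ + Finsupp.single k (u + 1)) f -
        coeff (ρ + Finsupp.single j (u + 1)) f else 0 := by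
    rcases eq_or_ne k j with rfl | hkj
    · simp [divDiff_self]
    split_ifs with hj
    · rw [coeff_divDiff_of_apply_eq_zero hkj (by simp [hj, hkj]), hadd, swapExp_add_single hk hj]
    · refine coeff_divDiff_eq_zero_of_sumSq hf ?_ ?_
      · simpa [hk, hkj.symm] using (hρ j).resolve_left hj
      · rw [hadd, sumSq_add_single, hk]
        omega
  rw [dunkl_apply, coeff_add, coeff_C_mul, coeff_sum, coeff_pderiv, hadd, Finset.sum_filter]
  simp only [hD, Finsupp.add_apply, hk, Finsupp.single_eq_same, zero_add, Nat.cast_add_one]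
  ring

/-- The parameter `γ` is not of the form `-v / t` with `v ≥ 1` and `2 ≤ t ≤ card ι`. This excludes
all parameters for which some nonconstant polynomial is annihilated by all Dunkl operators. -/
def IsNonsingularParam (ι : Type*) [Fintype ι] {K : Type*} [Semiring K] (γ : K) : Prop :=
  ∀ t : ℕ, 2 ≤ t → t ≤ Fintype.card ι → ∀ v : ℕ, v ≠ 0 → (v : K) + γ * t ≠ 0

lemma exists_dunkl_ne_zero [CharZero K] {γ : K} (hγ : IsNonsingularParam ι γ)
    {f : MvPolynomial ι K} {η : ι →₀ ℕ} (hη : η ≠ 0) (hηf : coeff η f ≠ 0) :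
    ∃ i, dunkl γ i f ≠ 0 := by
  by_contra! hf
  obtain ⟨ρ, u, i, hi, hρ, hmax, hne⟩ := exists_sumSq_maximal hη hηf
  refine hne (eq_zero_of_mul_add_mul_sum_sub_eq_zero (v := ((u + 1 : ℕ) : K)) (γ := γ)
    (s := {j | ρ j = 0}) (x := fun k => coeff (ρ + Finsupp.single k (u + 1)) f)
    (Nat.cast_ne_zero.2 u.succ_ne_zero)
    (fun hcard => hγ _ hcard (Finset.card_le_univ _) _ u.succ_ne_zero) (fun k hk => ?_)
    (by simpa using hi))
  rw [← coeff_dunkl_of_sumSq_maximal γ hρ hmax (by simpa using hk), hf k, coeff_zero]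

lemma isHomogeneous_dunkl (γ : K) (i : ι) {f : MvPolynomial ι K} {m : ℕ}
    (hf : f.IsHomogeneous (m + 1)) : (dunkl γ i f).IsHomogeneous m := by
  have hsum := IsHomogeneous.sum Finset.univ (fun j => divDiff i j f) m
    fun j _ => isHomogeneous_divDiff i j hf
  rw [dunkl_apply]
  exact hf.pderiv.add (zero_add m ▸ (isHomogeneous_C ι γ).mul hsum)

lemma isHomogeneous_dunkl_prod (γ : K) (w : List ι) {f : MvPolynomial ι K} {m : ℕ}
    (hf : f.IsHomogeneous (m + w.length)) :
    ((w.map (dunkl γ)).prod f).IsHomogeneous m := by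
  induction w generalizing m with
  | nil => exact hf
  | cons i w ih =>
    rw [List.length_cons, ← add_assoc, add_right_comm] at hf
    exact isHomogeneous_dunkl γ i (ih hf)

lemma map_dunkl_prod {K' : Type*} [CommRing K'] [IsDomain K'] (φ : K →+* K') (γ : K)
    (w : List ι) (f : MvPolynomial ι K) :
    map φ ((w.map (dunkl γ)).prod f) = (w.map (dunkl (φ γ))).prod (map φ f) := by
  induction w with
  | nil => rfl
  | cons i w ih =>
    simp only [List.map_cons, List.prod_cons, Module.End.mul_apply, map_dunkl, ih]

theorem exists_dunkl_prod_ne_zero [CharZero K] {γ : K} (hγ : IsNonsingularParam ι γ) {m : ℕ}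
    {f : MvPolynomial ι K} (hf : f.IsHomogeneous m) (hf0 : f ≠ 0) :
    ∃ w : List ι, w.length = m ∧ (w.map (dunkl γ)).prod f ≠ 0 := by
  induction m generalizing f with
  | zero => exact ⟨[], rfl, hf0⟩
  | succ m ih =>
    obtain ⟨η, hη⟩ := MvPolynomial.ne_zero_iff.1 hf0
    have hη0 : η ≠ 0 := by
      rintro rfl
      exact hη (hf.coeff_eq_zero (by simp))
    obtain ⟨i, hi⟩ := exists_dunkl_ne_zero hγ hη0 hη
    obtain ⟨w, hw, hw0⟩ := ih (isHomogeneous_dunkl γ i hf) hi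
    exact ⟨w ++ [i], by simp [hw], by simpa using hw0⟩

end SingularPolynomials

section DiffProd

variable (ι K : Type*) [Fintype ι] [CommRing K]

/-- The product of `X i - X j` over all ordered pairs `i ≠ j`, that is, up to sign, the square of
the Vandermonde determinant. -/
def diffProd : MvPolynomial ι K := ∏ q ∈ Finset.univ.offDiag, (X q.1 - X q.2)

variable {ι K}

lemma diffProd_ne_zero [IsDomain K] : diffProd ι K ≠ 0 :=
  Finset.prod_ne_zero_iff.2 fun _ hq => X_sub_X_ne_zero (Finset.mem_offDiag.1 hq).2.2

lemma isHomogeneous_diffProd_sq :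
    (diffProd ι K ^ 2).IsHomogeneous ((∑ _q ∈ (Finset.univ : Finset ι).offDiag, 1) * 2) :=
  (IsHomogeneous.prod _ _ _ fun _ _ => (isHomogeneous_X K _).sub (isHomogeneous_X K _)).pow 2

lemma map_diffProd {K' : Type*} [CommRing K'] (φ : K →+* K') :
    map φ (diffProd ι K) = diffProd ι K' := by
  simp [diffProd, map_prod]

variable [DecidableEq ι] [IsDomain K] {N : Submodule K (MvPolynomial ι K)} {α β γ : K}

/-- The constant `c` is the value of a product of Dunkl operators on `diffProd ^ 2`; it depends
on the specialization `φ` at which it has to be nonzero. -/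
theorem IsRelationModule.exists_diffProd_shift_mem (hN : IsRelationModule N α β γ)
    (h2 : IsUnit (2 : K)) (L : Type*) [CommRing L] [IsDomain L] [CharZero L] :
    ∃ M : ℕ, ∀ φ : K →+* L, IsNonsingularParam ι (φ γ) →
      ∃ c : K, φ c ≠ 0 ∧ ∀ f : MvPolynomial ι K,
        ∃ g, C c * (wallProd ι K ^ M * f) - g * diffProd ι K ^ 2 ∈ N := by
  refine ⟨(∑ _q ∈ (Finset.univ : Finset ι).offDiag, 1) * 2, fun φ hγ => ?_⟩
  have hhom := isHomogeneous_diffProd_sq (ι := ι) (K := K)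
  have hne : map φ (diffProd ι K ^ 2) ≠ 0 := by
    rw [map_pow, map_diffProd]
    exact pow_ne_zero _ diffProd_ne_zero
  obtain ⟨w, hw, hw0⟩ := exists_dunkl_prod_ne_zero hγ (hhom.map φ) hne
  obtain ⟨c, hc⟩ : ∃ c, (w.map (dunkl γ)).prod (diffProd ι K ^ 2) = C c := by
    refine ⟨_, (totalDegree_eq_zero_iff_eq_C).1 (Nat.le_zero.1 ?_)⟩
    exact (isHomogeneous_dunkl_prod γ w (by rwa [zero_add, hw])).totalDegree_le
  refine ⟨c, fun h => hw0 ?_, fun f => ?_⟩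
  · rw [← map_dunkl_prod, hc, map_C, h, C_0]
  · obtain ⟨g, hg⟩ := hN.exists_wallProd_pow_mul_dunkl_sub_mem h2 (diffProd ι K ^ 2) w f
    exact ⟨g, by rwa [← hw, mul_comm (C c), ← hc]⟩

end DiffProd

section HalfSpace

/-- The tube domain `{(α, β, γ) | a.1 < Re α, a.2.1 < Re β, a.2.2 < Re γ}` in `ℂ³`. -/
def halfSpace (a : ℝ × ℝ × ℝ) : Set (ℂ × ℂ × ℂ) :=
  {p | a.1 < p.1.re ∧ a.2.1 < p.2.1.re ∧ a.2.2 < p.2.2.re}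

lemma mem_halfSpace {a : ℝ × ℝ × ℝ} {p : ℂ × ℂ × ℂ} :
    p ∈ halfSpace a ↔ a.1 < p.1.re ∧ a.2.1 < p.2.1.re ∧ a.2.2 < p.2.2.re := Iff.rfl

lemma isOpen_halfSpace (a : ℝ × ℝ × ℝ) : IsOpen (halfSpace a) :=
  isOpen_lt continuous_const (by fun_prop) |>.and <|
    isOpen_lt continuous_const (by fun_prop) |>.and <|
      isOpen_lt continuous_const (by fun_prop)

lemma halfSpace_sup (a b : ℝ × ℝ × ℝ) : halfSpace (a ⊔ b) = halfSpace a ∩ halfSpace b := by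
  ext p
  simp only [mem_halfSpace, Set.mem_inter_iff, Prod.fst_sup, Prod.snd_sup, sup_lt_iff]
  tauto

lemma halfSpace_anti {a b : ℝ × ℝ × ℝ} (h : a ≤ b) : halfSpace b ⊆ halfSpace a := by
  rw [← sup_eq_right.2 h, halfSpace_sup]
  exact Set.inter_subset_left

lemma exists_forall_add_diag_mem_halfSpace (a : ℝ × ℝ × ℝ) (p : ℂ × ℂ × ℂ) :
    ∃ τ : ℝ, ∀ t : ℂ, τ < t.re ↔ p + (t, t, t) ∈ halfSpace a := by
  refine ⟨(a.1 - p.1.re) ⊔ ((a.2.1 - p.2.1.re) ⊔ (a.2.2 - p.2.2.re)), fun t => ?_⟩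
  simp only [sup_lt_iff, mem_halfSpace, Prod.fst_add, Prod.snd_add, add_re, sub_lt_iff_lt_add']

end HalfSpace

section Arrangement

variable {n : ℕ}

lemma setAhat_eq_iUnion_preimage (n : ℕ) : setAhat n =
    (⋃ j ∈ Finset.Icc 1 n,
      ((fun p : ℂ × ℂ × ℂ => p.1 + ((j : ℂ) - 1) * p.2.2) ⁻¹' Set.range ((↑) : ℤ → ℂ) ∪
        (fun p : ℂ × ℂ × ℂ => p.2.1 + ((j : ℂ) - 1) * p.2.2) ⁻¹' Set.range ((↑) : ℤ → ℂ))) ∪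
    ⋃ j ∈ Finset.Icc 1 (n - 1),
      (fun p : ℂ × ℂ × ℂ => ((j : ℂ) + 1) * p.2.2) ⁻¹' Set.range ((↑) : ℤ → ℂ) := by
  ext p
  simp only [setAhat, Set.mem_ofPred_eq, Set.mem_union, Set.mem_iUnion, Finset.mem_Icc,
    Set.mem_preimage, Set.mem_range, exists_prop, and_assoc, eq_comm]

lemma isOpen_compl_setAhat (n : ℕ) : IsOpen (setAhat n)ᶜ := by
  rw [isOpen_compl_iff, setAhat_eq_iUnion_preimage]
  refine (isClosed_biUnion_finset fun j _ => .union ?_ ?_).union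
    (isClosed_biUnion_finset fun j _ => ?_)
  all_goals exact isClosed_range_intCast.preimage (by fun_prop)

lemma add_intCast_mem_setAhat {p : ℂ × ℂ × ℂ} (k l m : ℤ) (hp : p ∈ setAhat n) :
    p + ((k : ℂ), (l : ℂ), (m : ℂ)) ∈ setAhat n := by
  rcases hp with ⟨j, hj1, hjn, ⟨z, hz⟩ | ⟨z, hz⟩⟩ | ⟨j, hj1, hjn, z, hz⟩
  · refine .inl ⟨j, hj1, hjn, .inl ⟨z + (k + (j - 1) * m), ?_⟩⟩
    push_cast [← hz, Prod.fst_add, Prod.snd_add]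
    ring
  · refine .inl ⟨j, hj1, hjn, .inr ⟨z + (l + (j - 1) * m), ?_⟩⟩
    push_cast [← hz, Prod.fst_add, Prod.snd_add]
    ring
  · refine .inr ⟨j, hj1, hjn, z + (j + 1) * m, ?_⟩
    push_cast [← hz, Prod.snd_add]
    ring

lemma add_intCast_mem_setAhat_iff {p : ℂ × ℂ × ℂ} (k l m : ℤ) :
    p + ((k : ℂ), (l : ℂ), (m : ℂ)) ∈ setAhat n ↔ p ∈ setAhat n := by
  refine ⟨fun h => ?_, add_intCast_mem_setAhat k l m⟩
  simpa [add_assoc, Prod.zero_eq_mk.symm] using add_intCast_mem_setAhat (-k) (-l) (-m) h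

lemma countable_setOf_add_mul_mem_range_intCast (a : ℂ) {b : ℂ} (hb : b ≠ 0) :
    {t : ℂ | a + b * t ∈ Set.range ((↑) : ℤ → ℂ)}.Countable :=
  (Set.countable_range _).preimage_of_injOn
    ((add_right_injective a).comp (mul_right_injective₀ hb)).injOn

/-- Every diagonal complex line is transverse to all hyperplanes of the arrangement. -/
lemma countable_setOf_add_diag_mem_setAhat (n : ℕ) (p : ℂ × ℂ × ℂ) :
    {t : ℂ | p + (t, t, t) ∈ setAhat n}.Countable := by
  simp only [setAhat_eq_iUnion_preimage, Set.mem_union, Set.mem_iUnion, Set.mem_preimage,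
    Set.ofPred_or, Set.ofPred_exists, Prod.fst_add, Prod.snd_add]
  have hcount (a : ℂ) {b : ℂ} (hb : b ≠ 0) {g : ℂ → ℂ} (hg : ∀ t, g t = a + b * t) :
      {t | g t ∈ Set.range ((↑) : ℤ → ℂ)}.Countable := by
    simpa only [hg] using countable_setOf_add_mul_mem_range_intCast a hb
  refine .union (.biUnion (Finset.countable_toSet _) fun j hj => ?_)
    (.biUnion (Finset.countable_toSet _) fun j _ => ?_)
  · have hj0 : (j : ℂ) ≠ 0 :=
      Nat.cast_ne_zero.2 (Nat.one_le_iff_ne_zero.1 (Finset.mem_Icc.1 hj).1)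
    exact .union (hcount (p.1 + (j - 1) * p.2.2) hj0 fun t => by ring)
      (hcount (p.2.1 + (j - 1) * p.2.2) hj0 fun t => by ring)
  · exact hcount ((j + 1) * p.2.2) j.cast_add_one_ne_zero fun t => by ring

lemma isPreconnected_setOf_lt_re_diff_countable (τ : ℝ) {S : Set ℂ} (hS : S.Countable) :
    IsPreconnected ({t : ℂ | τ < t.re} \ S) := by
  let φ : ℂ → ℂ := fun s => ⟨τ + Real.exp s.re, s.im⟩
  have hφ : Continuous φ := by
    simp only [φ, Complex.mk_eq_add_mul_I]
    fun_prop
  have hinj : Function.Injective φ := fun x y h => by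
    simpa [φ, Complex.ext_iff] using h
  have hrange : Set.range φ = {t : ℂ | τ < t.re} := by
    ext t
    refine ⟨?_, fun ht => ⟨⟨Real.log (t.re - τ), t.im⟩, ?_⟩⟩
    · rintro ⟨s, rfl⟩
      simpa [φ] using Real.exp_pos s.re
    · simp [φ, Real.exp_log (sub_pos.2 ht)]
  have hpre : IsPreconnected (φ ⁻¹' S)ᶜ :=
    ((hS.preimage_of_injOn hinj.injOn).isConnected_compl_of_one_lt_rank
      (by simp [Complex.rank_real_complex])).isPreconnected
  rw [← hrange, ← Set.image_compl_preimage]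
  exact hpre.image φ hφ.continuousOn

lemma exists_lt_re_notMem_of_countable (τ : ℝ) {S : Set ℂ} (hS : S.Countable) :
    ∃ t : ℂ, τ < t.re ∧ t ∉ S :=
  (hS.dense_compl ℝ).inter_open_nonempty {t | τ < t.re} (isOpen_lt (by fun_prop) (by fun_prop))
    ⟨(τ + 1 : ℝ), by simp⟩

/-- Restrict to the diagonal line through a point: it meets the arrangement in a countable set,
whose complement in a half plane is connected, and it ends in the smaller half space. -/
theorem eqOn_halfSpace_of_eqOn_halfSpace {a b : ℝ × ℝ × ℝ} {F G : ℂ × ℂ × ℂ → ℂ}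
    (hF : AnalyticOnNhd ℂ F ((setAhat n)ᶜ ∩ halfSpace a))
    (hG : AnalyticOnNhd ℂ G ((setAhat n)ᶜ ∩ halfSpace a))
    (h : Set.EqOn F G ((setAhat n)ᶜ ∩ halfSpace b)) :
    Set.EqOn F G ((setAhat n)ᶜ ∩ halfSpace a) := by
  intro p hp
  obtain ⟨τ, hτ⟩ := exists_forall_add_diag_mem_halfSpace a p
  obtain ⟨σ, hσ⟩ := exists_forall_add_diag_mem_halfSpace b p
  have hcount := countable_setOf_add_diag_mem_setAhat n p
  obtain ⟨t₀, ht₀, ht₀S⟩ := exists_lt_re_notMem_of_countable (τ ⊔ σ) hcount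
  have hdiag (t : ℂ) : AnalyticAt ℂ (fun t : ℂ => p + (t, t, t)) t := by fun_prop
  have heq := AnalyticOnNhd.eqOn_of_preconnected_of_eventuallyEq (z₀ := t₀)
    (f := fun t => F (p + (t, t, t))) (g := fun t => G (p + (t, t, t)))
    (fun t ht => (hF _ ⟨ht.2, (hτ t).1 ht.1⟩).comp_of_eq (hdiag t) rfl)
    (fun t ht => (hG _ ⟨ht.2, (hτ t).1 ht.1⟩).comp_of_eq (hdiag t) rfl)
    (isPreconnected_setOf_lt_re_diff_countable τ hcount)
    ⟨le_sup_left.trans_lt ht₀, ht₀S⟩ ?_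
  · have hp0 : p + ((0 : ℂ), (0 : ℂ), (0 : ℂ)) = p := by simp
    simpa only [hp0] using
      heq (x := 0) ⟨(hτ 0).2 (by rw [hp0]; exact hp.2), by simpa [hp0] using hp.1⟩
  · filter_upwards [(hdiag t₀).continuousAt.eventually_mem
      (((isOpen_compl_setAhat n).inter (isOpen_halfSpace b)).mem_nhds
        ⟨ht₀S, (hσ t₀).1 (le_sup_right.trans_lt ht₀)⟩)] with t ht using h ht

theorem eqOn_compl_setAhat_of_eqOn_halfSpace {b : ℝ × ℝ × ℝ} {F G : ℂ × ℂ × ℂ → ℂ}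
    (hF : AnalyticOnNhd ℂ F (setAhat n)ᶜ) (hG : AnalyticOnNhd ℂ G (setAhat n)ᶜ)
    (h : Set.EqOn F G ((setAhat n)ᶜ ∩ halfSpace b)) : Set.EqOn F G (setAhat n)ᶜ := fun p hp =>
  eqOn_halfSpace_of_eqOn_halfSpace (a := (p.1.re - 1, p.2.1.re - 1, p.2.2.re - 1))
    (hF.mono Set.inter_subset_left) (hG.mono Set.inter_subset_left) h
    ⟨hp, sub_one_lt _, sub_one_lt _, sub_one_lt _⟩

/-- The local solutions `G / c` agree on overlaps by the identity theorem. -/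
theorem exists_analyticOnNhd_of_local_ratio {a₀ : ℝ × ℝ × ℝ} {I : ℂ × ℂ × ℂ → ℂ}
    (hI : AnalyticOnNhd ℂ I (halfSpace a₀)) {S : Set (ℂ × ℂ × ℂ)} (hS : IsOpen S)
    (hSA : S ⊆ (setAhat n)ᶜ)
    (h : ∀ p₀ ∈ S, ∃ (a b : ℝ × ℝ × ℝ) (c G : ℂ × ℂ × ℂ → ℂ), p₀ ∈ halfSpace a ∧
      AnalyticOnNhd ℂ c Set.univ ∧ c p₀ ≠ 0 ∧
      AnalyticOnNhd ℂ G ((setAhat n)ᶜ ∩ halfSpace a) ∧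
      Set.EqOn (fun p => c p * I p) G ((setAhat n)ᶜ ∩ halfSpace b)) :
    ∃ F : ℂ × ℂ × ℂ → ℂ, AnalyticOnNhd ℂ F S ∧ Set.EqOn F I (S ∩ halfSpace a₀) := by
  choose! a b c G hmem hc hc0 hG heq using h
  refine ⟨fun p => G p p / c p p, fun p₀ hp₀ => ?_, fun p ⟨hpS, hp⟩ => ?_⟩
  · refine ((hG p₀ hp₀ p₀ ⟨hSA hp₀, hmem p₀ hp₀⟩).div (hc p₀ hp₀ p₀ trivial)
      (hc0 p₀ hp₀)).congr ?_
    filter_upwards [(isOpen_halfSpace _).mem_nhds (hmem p₀ hp₀), hS.mem_nhds hp₀,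
      (hc p₀ hp₀ p₀ trivial).continuousAt.eventually_ne (hc0 p₀ hp₀)] with p hpa hpS hpc
    have hcross : Set.EqOn (fun q => G p₀ q * c p q) (fun q => G p q * c p₀ q)
        ((setAhat n)ᶜ ∩ halfSpace (b p₀ ⊔ b p)) := by
      rw [halfSpace_sup]
      rintro q ⟨hqA, hq₀, hq⟩
      simp only [← heq p₀ hp₀ ⟨hqA, hq₀⟩, ← heq p hpS ⟨hqA, hq⟩]
      ring
    simp only [Pi.div_apply]
    rw [div_eq_div_iff hpc (hc0 p hpS)]
    refine eqOn_halfSpace_of_eqOn_halfSpace (a := a p₀ ⊔ a p) (fun q hq => ?_) (fun q hq => ?_)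
      hcross ⟨hSA hpS, by rw [halfSpace_sup]; exact ⟨hpa, hmem p hpS⟩⟩ <;>
      rw [halfSpace_sup] at hq
    · exact (hG p₀ hp₀ q ⟨hq.1, hq.2.1⟩).mul (hc p hpS q trivial)
    · exact (hG p hpS q ⟨hq.1, hq.2.2⟩).mul (hc p₀ hp₀ q trivial)
  · simp only
    rw [div_eq_iff (hc0 p hpS), mul_comm]
    refine (eqOn_halfSpace_of_eqOn_halfSpace (a := a p ⊔ a₀) (fun q hq => ?_) (fun q hq => ?_)
      (heq p hpS) ⟨hSA hpS, by rw [halfSpace_sup]; exact ⟨hmem p hpS, hp⟩⟩).symm <;>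
      rw [halfSpace_sup] at hq
    · exact (hc p hpS q trivial).mul (hI q hq.2.2)
    · exact hG p hpS q ⟨hq.1, hq.2.1⟩

end Arrangement

section ParametricIntegral

open scoped NNReal

variable {Y E F : Type*} [MeasurableSpace Y] {μ : Measure Y} [NormedAddCommGroup E]
  [NormedSpace ℂ E] [NormedAddCommGroup F] [NormedSpace ℂ F]

section

variable {f : Y → E → F} {P : Y → FormalMultilinearSeries ℂ E F} {p : E} {r : ℝ≥0} {g : Y → ℝ}

lemma integrable_formalMultilinearSeries_apply (hr : 0 < r)
    (hP : ∀ k, AEStronglyMeasurable (fun x => P x k) μ) (hg : Integrable g μ)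
    (hbound : ∀ᵐ x ∂μ, ∀ s : Finset ℕ, ∑ k ∈ s, ‖P x k‖ * r ^ k ≤ g x) (k : ℕ) :
    Integrable (fun x => P x k) μ := by
  refine (hg.div_const ((r : ℝ) ^ k)).mono' (hP k) ?_
  filter_upwards [hbound] with x hx
  rw [le_div_iff₀ (by positivity)]
  simpa using hx {k}

lemma sum_integral_norm_mul_pow_le (hr : 0 < r)
    (hP : ∀ k, AEStronglyMeasurable (fun x => P x k) μ) (hg : Integrable g μ)
    (hbound : ∀ᵐ x ∂μ, ∀ s : Finset ℕ, ∑ k ∈ s, ‖P x k‖ * r ^ k ≤ g x) (s : Finset ℕ) :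
    ∑ k ∈ s, (∫ x, ‖P x k‖ ∂μ) * r ^ k ≤ ∫ x, g x ∂μ := by
  have hInt (k : ℕ) : Integrable (fun x => ‖P x k‖ * (r : ℝ) ^ k) μ :=
    (integrable_formalMultilinearSeries_apply hr hP hg hbound k).norm.mul_const _
  simp only [← integral_mul_const]
  rw [← integral_finsetSum s fun k _ => hInt k]
  refine integral_mono_ae (integrable_finsetSum s fun k _ => hInt k) hg ?_
  filter_upwards [hbound] with x hx using hx s

theorem hasFPowerSeriesOnBall_integral [CompleteSpace F] (hr : 0 < r)
    (hP : ∀ k, AEStronglyMeasurable (fun x => P x k) μ)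
    (hf : ∀ᵐ x ∂μ, HasFPowerSeriesOnBall (f x) (P x) p r) (hg : Integrable g μ)
    (hbound : ∀ᵐ x ∂μ, ∀ s : Finset ℕ, ∑ k ∈ s, ‖P x k‖ * r ^ k ≤ g x) :
    HasFPowerSeriesOnBall (fun q => ∫ x, f x q ∂μ) (fun k => ∫ x, P x k ∂μ) p r where
  r_le := by
    refine FormalMultilinearSeries.le_radius_of_bound _ (∫ x, g x ∂μ) fun k => ?_
    calc ‖∫ x, P x k ∂μ‖ * (r : ℝ) ^ k ≤ (∫ x, ‖P x k‖ ∂μ) * r ^ k := by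
          gcongr
          exact norm_integral_le_integral_norm _
      _ ≤ ∫ x, g x ∂μ := by simpa using sum_integral_norm_mul_pow_le hr hP hg hbound {k}
  r_pos := by exact_mod_cast hr
  hasSum {h} hh := by
    have hP_int := integrable_formalMultilinearSeries_apply hr hP hg hbound
    have hh_le : ‖h‖ ≤ r := by
      have hlt : ‖h‖ < r := by simpa using hh
      exact hlt.le
    let ev (k : ℕ) := ContinuousMultilinearMap.apply ℂ (fun _ : Fin k => E) F fun _ => h
    have hterm (k : ℕ) (x : Y) : ‖P x k fun _ => h‖ ≤ ‖P x k‖ * r ^ k := by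
      refine ((P x k).le_opNorm _).trans ?_
      simp only [Finset.prod_const, Finset.card_univ, Fintype.card_fin]
      gcongr
    have hInt (k : ℕ) : Integrable (fun x => P x k fun _ => h) μ :=
      (ev k).integrable_comp (hP_int k)
    have hsummable : Summable fun k => ∫ x, ‖P x k fun _ => h‖ ∂μ := by
      refine summable_of_sum_le (fun k => integral_nonneg fun x => norm_nonneg _) fun s =>
        (Finset.sum_le_sum fun k _ => ?_).trans
          (sum_integral_norm_mul_pow_le hr hP hg hbound s)
      rw [← integral_mul_const]
      exact integral_mono (hInt k).norm ((hP_int k).norm.mul_const _) (hterm k)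
    have hsum := hasSum_integral_of_summable_integral_norm hInt hsummable
    have hcomm (k : ℕ) : (∫ x, P x k ∂μ) (fun _ => h) = ∫ x, P x k (fun _ => h) ∂μ :=
      ((ev k).integral_comp_comm (hP_int k)).symm
    simp only [hcomm]
    convert hsum using 1
    refine integral_congr_ae ?_
    filter_upwards [hf] with x hx using (hx.hasSum hh).tsum_eq.symm

end

variable {w : Y → ℂ} {ℓ : Y → E →L[ℂ] ℂ}

lemma norm_expSeries_compContinuousLinearMap_le (l : E →L[ℂ] ℂ) (k : ℕ) :
    ‖(NormedSpace.expSeries ℂ ℂ).compContinuousLinearMap l k‖ ≤ ‖l‖ ^ k / k.factorial := by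
  refine (ContinuousMultilinearMap.norm_compContinuousLinearMap_le _ _).trans ?_
  simp [NormedSpace.expSeries, norm_smul, div_eq_inv_mul]

lemma continuous_expSeries_compContinuousLinearMap (k : ℕ) :
    Continuous fun l : E →L[ℂ] ℂ => (NormedSpace.expSeries ℂ ℂ).compContinuousLinearMap l k :=
  ((ContinuousMultilinearMap.compContinuousLinearMapContinuousMultilinear ℂ
    (fun _ : Fin k => E) (fun _ => ℂ) ℂ).cont.comp (continuous_pi fun _ => continuous_id)).clm_apply
      continuous_const

lemma hasFPowerSeriesOnBall_cexp_comp (l : E →L[ℂ] ℂ) (p : E) {r : ℝ≥0} (hr : 0 < r) :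
    HasFPowerSeriesOnBall (fun q => cexp (l q))
      (cexp (l p) • (NormedSpace.expSeries ℂ ℂ).compContinuousLinearMap l) p r := by
  have hexp : HasFPowerSeriesOnBall cexp (NormedSpace.expSeries ℂ ℂ) (l 0) ⊤ := by
    rw [map_zero, Complex.exp_eq_exp_ℂ]
    exact NormedSpace.exp_hasFPowerSeriesOnBall
  have hsub := (hexp.compContinuousLinearMap.comp_sub p).const_smul (c := cexp (l p))
  rw [zero_add, ENNReal.top_div_of_ne_top enorm_ne_top] at hsub
  refine (hsub.mono (by exact_mod_cast hr) le_top).congr fun q _ => ?_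
  simp [← Complex.exp_add]

theorem analyticAt_integral_mul_cexp {p : E} {r : ℝ≥0} (hr : 0 < r)
    (hw : AEStronglyMeasurable w μ) (hℓ : AEStronglyMeasurable ℓ μ)
    (hInt : Integrable (fun x => ‖w x * cexp (ℓ x p)‖ * Real.exp (‖ℓ x‖ * r)) μ) :
    AnalyticAt ℂ (fun q => ∫ x, w x * cexp (ℓ x q) ∂μ) p := by
  let P (x : Y) : FormalMultilinearSeries ℂ E ℂ :=
    w x • cexp (ℓ x p) • (NormedSpace.expSeries ℂ ℂ).compContinuousLinearMap (ℓ x)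
  refine (hasFPowerSeriesOnBall_integral (P := P) hr (fun k => ?_) (.of_forall fun x => ?_)
    hInt (.of_forall fun x s => ?_)).analyticAt
  · refine hw.smul ((continuous_exp.comp_aestronglyMeasurable
      (hℓ.apply_continuousLinearMap p)).smul ?_)
    exact (continuous_expSeries_compContinuousLinearMap k).comp_aestronglyMeasurable hℓ
  · exact (hasFPowerSeriesOnBall_cexp_comp (ℓ x) p hr).const_smul (c := w x)
  · calc ∑ k ∈ s, ‖P x k‖ * r ^ k
        ≤ ∑ k ∈ s, ‖w x * cexp (ℓ x p)‖ * ((‖ℓ x‖ * r) ^ k / k.factorial) := by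
          refine Finset.sum_le_sum fun k _ => ?_
          simp only [P, smul_smul, FormalMultilinearSeries.smul_apply, norm_smul]
          rw [mul_assoc, mul_pow, mul_div_right_comm]
          gcongr
          exact norm_expSeries_compContinuousLinearMap_le (ℓ x) k
      _ ≤ ‖w x * cexp (ℓ x p)‖ * Real.exp (‖ℓ x‖ * r) := by
          rw [← Finset.mul_sum, Real.exp_eq_exp_ℝ, NormedSpace.exp_eq_tsum_div]
          gcongr
          exact (Real.summable_pow_div_factorial _).sum_le_tsum s fun k _ => by positivity

end ParametricIntegral

section PosPow

/-- The one-sided complex power `t₊ ^ s`, vanishing for `t ≤ 0`. -/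
def posPow (s : ℂ) (t : ℝ) : ℂ := if 0 < t then (t : ℂ) ^ s else 0

lemma posPow_of_pos (s : ℂ) {t : ℝ} (ht : 0 < t) : posPow s t = (t : ℂ) ^ s := if_pos ht

lemma posPow_of_nonpos (s : ℂ) {t : ℝ} (ht : t ≤ 0) : posPow s t = 0 := if_neg ht.not_gt

lemma posPow_eq_cexp (s : ℂ) {t : ℝ} (ht : 0 < t) : posPow s t = cexp (Real.log t * s) := by
  rw [posPow_of_pos s ht, cpow_def_of_ne_zero (ofReal_ne_zero.2 ht.ne'), ofReal_log ht.le]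

lemma posPow_add_one (s : ℂ) (t : ℝ) : posPow (s + 1) t = t * posPow s t := by
  rcases lt_or_ge 0 t with ht | ht
  · rw [posPow_of_pos _ ht, posPow_of_pos _ ht, cpow_add _ _ (ofReal_ne_zero.2 ht.ne'), cpow_one,
      mul_comm]
  · rw [posPow_of_nonpos _ ht, posPow_of_nonpos _ ht, mul_zero]

lemma posPow_abs (s : ℂ) (t : ℝ) : posPow s |t| = posPow s t + posPow s (-t) := by
  rcases le_total 0 t with ht | ht
  · rw [abs_of_nonneg ht, posPow_of_nonpos s (neg_nonpos.2 ht), add_zero]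
  · rw [abs_of_nonpos ht, posPow_of_nonpos s ht, zero_add]

lemma posPow_add_two_abs (s : ℂ) (t : ℝ) : posPow (s + 2) |t| = (t : ℂ) ^ 2 * posPow s |t| := by
  rw [show s + 2 = s + 1 + 1 by ring, posPow_add_one, posPow_add_one, ← mul_assoc, ← pow_two,
    ← ofReal_pow, sq_abs, ofReal_pow]

lemma norm_posPow_le (s : ℂ) (t : ℝ) : ‖posPow s t‖ ≤ |t| ^ s.re := by
  rcases lt_or_ge 0 t with ht | ht
  · rw [posPow_of_pos s ht, norm_cpow_eq_rpow_re_of_pos ht, abs_of_pos ht]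
  · rw [posPow_of_nonpos s ht, norm_zero]
    positivity

lemma measurable_posPow (s : ℂ) : Measurable (posPow s) :=
  Measurable.ite measurableSet_Ioi (by fun_prop) measurable_const

lemma integrable_posPow_mul_posPow {a b : ℂ} (ha : -1 < a.re) (hb : -1 < b.re) :
    Integrable fun t : ℝ => posPow a t * posPow b (1 - t) := by
  have hbeta := betaIntegral_convergent (u := a + 1) (v := b + 1)
    (by rw [add_re, one_re]; linarith) (by rw [add_re, one_re]; linarith)
  rw [intervalIntegrable_iff_integrableOn_Ioo_of_le zero_le_one] at hbeta
  refine (integrable_indicator_iff measurableSet_Ioo).2 hbeta |>.congr (.of_forall fun t => ?_)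
  by_cases ht : t ∈ Set.Ioo (0 : ℝ) 1
  · simp [Set.indicator_of_mem ht, posPow_of_pos _ ht.1, posPow_of_pos _ (sub_pos.2 ht.2)]
  · rw [Set.indicator_of_notMem ht]
    beta_reduce
    rcases le_or_gt t 0 with ht0 | ht0
    · rw [posPow_of_nonpos a ht0, zero_mul]
    · rw [posPow_of_nonpos b (sub_nonpos.2 (not_lt.1 fun ht1 => ht ⟨ht0, ht1⟩)), mul_zero]

end PosPow

section GenericCube

variable {ι : Type*}

/-- The points of the open unit cube with pairwise distinct coordinates. -/
def genericCube (ι : Type*) : Set (ι → ℝ) :=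
  {y | (∀ i, y i ∈ Set.Ioo 0 1) ∧ Function.Injective y}

lemma abs_sub_pos_of_mem_genericCube {y : ι → ℝ} (hy : y ∈ genericCube ι) {i j : ι}
    (hij : i ≠ j) : 0 < |y i - y j| :=
  abs_pos.2 (sub_ne_zero.2 (hy.2.ne hij))

lemma abs_sub_le_one_of_mem_genericCube {y : ι → ℝ} (hy : y ∈ genericCube ι) (i j : ι) :
    |y i - y j| ≤ 1 :=
  abs_le.2 ⟨by linarith [(hy.1 i).1, (hy.1 j).2], by linarith [(hy.1 i).2, (hy.1 j).1]⟩

lemma measurableSet_genericCube [Countable ι] : MeasurableSet (genericCube ι) := by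
  have h : genericCube ι =
      (⋂ i, {y | y i ∈ Set.Ioo 0 1}) ∩ ⋂ i, ⋂ j, {y | y i = y j → i = j} := by
    ext y
    simp [genericCube, Function.Injective]
  rw [h]
  refine .inter (.iInter fun i => measurable_pi_apply i measurableSet_Ioo)
    (.iInter fun i => .iInter fun j => .imp ?_ (.const _))
  exact measurableSet_eq_fun (measurable_pi_apply i) (measurable_pi_apply j)

/-- Evaluation of a complex polynomial at a real point. -/
def evalReal (y : ι → ℝ) : MvPolynomial ι ℂ →+* ℂ := eval fun i => (y i : ℂ)

lemma continuous_evalReal (f : MvPolynomial ι ℂ) : Continuous fun y => evalReal y f :=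
  (MvPolynomial.continuous_eval f).comp (by fun_prop)

lemma norm_evalReal_le {y : ι → ℝ} (hy : y ∈ genericCube ι) (f : MvPolynomial ι ℂ) :
    ‖evalReal y f‖ ≤ ∑ m ∈ f.support, ‖coeff m f‖ := by
  rw [evalReal, eval_eq]
  refine (norm_sum_le _ _).trans (Finset.sum_le_sum fun m _ => ?_)
  rw [norm_mul, norm_prod]
  refine mul_le_of_le_one_right (norm_nonneg _) (Finset.prod_le_one (fun _ _ => norm_nonneg _) ?_)
  intro i _
  rw [norm_pow, norm_real, Real.norm_of_nonneg (hy.1 i).1.le]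
  exact pow_le_one₀ (hy.1 i).1.le (hy.1 i).2.le

lemma evalReal_swapVars [DecidableEq ι] (i j : ι) (f : MvPolynomial ι ℂ) (y : ι → ℝ) :
    evalReal y (swapVars i j f) = evalReal (y ∘ Equiv.swap i j) f :=
  eval_rename _ _ _

end GenericCube

section Weight

variable {ι : Type*} [Fintype ι]

/-- The symmetric Selberg weight `∏ yᵢ^α (1-yᵢ)^β ∏_{i<j} |yᵢ-yⱼ|^{2γ}` at `p = (α, β, γ)`,
extended by zero outside the unit cube. The last product runs over ordered pairs, whence the
exponent `γ`. -/
def weight (p : ℂ × ℂ × ℂ) (y : ι → ℝ) : ℂ :=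
  (∏ i, posPow p.1 (y i) * posPow p.2.1 (1 - y i)) *
    ∏ q ∈ (Finset.univ : Finset ι).offDiag, posPow p.2.2 |y q.1 - y q.2|

lemma weight_eq_zero_of_notMem (p : ℂ × ℂ × ℂ) {y : ι → ℝ} (hy : y ∉ genericCube ι) :
    weight p y = 0 := by
  by_cases hcube : ∀ i, y i ∈ Set.Ioo 0 1
  · obtain ⟨i, j, hyij, hij⟩ := Function.not_injective_iff.1 fun hinj => hy ⟨hcube, hinj⟩
    rw [weight, Finset.prod_eq_zero (i := (i, j)) (by simpa using hij)
      (posPow_of_nonpos _ (by simp [hyij])), mul_zero]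
  · obtain ⟨i, hi⟩ := not_forall.1 hcube
    rw [weight, Finset.prod_eq_zero (Finset.mem_univ i), zero_mul]
    rcases le_or_gt (y i) 0 with h0 | h0
    · rw [posPow_of_nonpos _ h0, zero_mul]
    · rw [posPow_of_nonpos _ (sub_nonpos.2 (not_lt.1 fun h1 => hi ⟨h0, h1⟩)), mul_zero]

lemma measurable_weight (p : ℂ × ℂ × ℂ) : Measurable (weight (ι := ι) p) := by
  have := measurable_posPow
  unfold weight
  fun_prop

lemma norm_weight_le (p : ℂ × ℂ × ℂ) (hp : 0 ≤ p.2.2.re) (y : ι → ℝ) :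
    ‖weight p y‖ ≤ ∏ i, ‖posPow p.1 (y i) * posPow p.2.1 (1 - y i)‖ := by
  by_cases hy : y ∈ genericCube ι
  · rw [weight, norm_mul, norm_prod, norm_prod]
    refine mul_le_of_le_one_right (by positivity)
      (Finset.prod_le_one (fun _ _ => norm_nonneg _) fun q _ => ?_)
    refine (norm_posPow_le _ _).trans (Real.rpow_le_one (abs_nonneg _) ?_ hp)
    rw [abs_abs]
    exact abs_sub_le_one_of_mem_genericCube hy q.1 q.2
  · rw [weight_eq_zero_of_notMem p hy, norm_zero]
    positivity

lemma integrable_weight {p : ℂ × ℂ × ℂ} (hp : p ∈ halfSpace (-1, -1, 0)) :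
    Integrable (weight (ι := ι) p) :=
  (Integrable.fintype_prod fun _ => (integrable_posPow_mul_posPow hp.1 hp.2.1).norm).mono'
    (measurable_weight p).aestronglyMeasurable (.of_forall (norm_weight_le p hp.2.2.le))

lemma integrable_evalReal_mul_weight (f : MvPolynomial ι ℂ) {p : ℂ × ℂ × ℂ}
    (hp : p ∈ halfSpace (-1, -1, 0)) : Integrable fun y => evalReal y f * weight p y := by
  refine ((integrable_weight hp).norm.const_mul (∑ m ∈ f.support, ‖coeff m f‖)).mono'
    ((continuous_evalReal f).measurable.mul (measurable_weight p)).aestronglyMeasurable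
    (.of_forall fun y => ?_)
  by_cases hy : y ∈ genericCube ι
  · rw [norm_mul]
    gcongr
    exact norm_evalReal_le hy f
  · simp [weight_eq_zero_of_notMem p hy]

end Weight

section LogForm

variable {ι : Type*} [Fintype ι]

/-- The real linear form with coefficients `a`, extended to `ℂ³`. -/
def realForm (a : ℝ × ℝ × ℝ) : ℂ × ℂ × ℂ →L[ℂ] ℂ :=
  ((a.1 : ℂ) • ContinuousLinearMap.id ℂ ℂ).coprod
    (((a.2.1 : ℂ) • ContinuousLinearMap.id ℂ ℂ).coprod ((a.2.2 : ℂ) • ContinuousLinearMap.id ℂ ℂ))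

lemma realForm_apply (a : ℝ × ℝ × ℝ) (p : ℂ × ℂ × ℂ) :
    realForm a p = a.1 * p.1 + (a.2.1 * p.2.1 + a.2.2 * p.2.2) := by
  simp [realForm]

lemma continuous_realForm : Continuous realForm := by
  unfold realForm
  fun_prop

lemma norm_realForm_le (a : ℝ × ℝ × ℝ) : ‖realForm a‖ ≤ |a.1| + (|a.2.1| + |a.2.2|) := by
  refine ContinuousLinearMap.opNorm_le_bound _ (by positivity) fun p => ?_
  have h₁ : ‖p.1‖ ≤ ‖p‖ := norm_fst_le p
  have h₂ : ‖p.2.1‖ ≤ ‖p‖ := (norm_fst_le p.2).trans (norm_snd_le p)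
  have h₃ : ‖p.2.2‖ ≤ ‖p‖ := (norm_snd_le p.2).trans (norm_snd_le p)
  calc ‖realForm a p‖ ≤ |a.1| * ‖p.1‖ + (|a.2.1| * ‖p.2.1‖ + |a.2.2| * ‖p.2.2‖) := by
        rw [realForm_apply]
        refine (norm_add_le _ _).trans (add_le_add ?_ ((norm_add_le _ _).trans (add_le_add ?_ ?_)))
          <;> simp
    _ ≤ |a.1| * ‖p‖ + (|a.2.1| * ‖p‖ + |a.2.2| * ‖p‖) := by gcongr
    _ = (|a.1| + (|a.2.1| + |a.2.2|)) * ‖p‖ := by ring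

/-- The logarithms of the three factors of the Selberg weight, the coefficients of `α`, `β`, `γ` in
`log (weight (α, β, γ) y)`. -/
def logFactors (y : ι → ℝ) : ℝ × ℝ × ℝ :=
  (∑ i, Real.log (y i), ∑ i, Real.log (1 - y i),
    ∑ q ∈ (Finset.univ : Finset ι).offDiag, Real.log |y q.1 - y q.2|)

lemma measurable_logFactors : Measurable (logFactors (ι := ι)) := by
  unfold logFactors
  fun_prop

lemma logFactors_nonpos {y : ι → ℝ} (hy : y ∈ genericCube ι) : logFactors y ≤ 0 := by
  refine ⟨Finset.sum_nonpos fun i _ => ?_, Finset.sum_nonpos fun i _ => ?_,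
    Finset.sum_nonpos fun q _ => ?_⟩
  · exact Real.log_nonpos (hy.1 i).1.le (hy.1 i).2.le
  · exact Real.log_nonpos (sub_nonneg.2 (hy.1 i).2.le) (by linarith [(hy.1 i).1])
  · exact Real.log_nonpos (abs_nonneg _) (abs_sub_le_one_of_mem_genericCube hy _ _)

lemma weight_eq_cexp (p : ℂ × ℂ × ℂ) {y : ι → ℝ} (hy : y ∈ genericCube ι) :
    weight p y = cexp (realForm (logFactors y) p) := by
  rw [realForm_apply, ← add_assoc, exp_add, exp_add, logFactors]
  simp only [ofReal_sum, Finset.sum_mul, exp_sum]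
  rw [weight, Finset.prod_mul_distrib]
  refine congr_arg₂ (· * ·) (congr_arg₂ (· * ·) ?_ ?_) ?_
  · exact Finset.prod_congr rfl fun i _ => posPow_eq_cexp _ (hy.1 i).1
  · exact Finset.prod_congr rfl fun i _ => posPow_eq_cexp _ (sub_pos.2 (hy.1 i).2)
  · exact Finset.prod_congr rfl fun q hq =>
      posPow_eq_cexp _ (abs_sub_pos_of_mem_genericCube hy (Finset.mem_offDiag.1 hq).2.2)

lemma norm_weight_mul_exp_le {p : ℂ × ℂ × ℂ} {r : ℝ} (hr : 0 ≤ r) {y : ι → ℝ}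
    (hy : y ∈ genericCube ι) :
    ‖weight p y‖ * Real.exp (‖realForm (logFactors y)‖ * r) ≤
      ‖weight (p - ((r : ℂ), (r : ℂ), (r : ℂ))) y‖ := by
  obtain ⟨h₁, h₂, h₃⟩ := logFactors_nonpos hy
  have hnorm := norm_realForm_le (logFactors y)
  rw [abs_of_nonpos h₁, abs_of_nonpos h₂, abs_of_nonpos h₃] at hnorm
  rw [weight_eq_cexp p hy, weight_eq_cexp _ hy, norm_exp, norm_exp, ← Real.exp_add,
    Real.exp_le_exp, map_sub, sub_re]
  have hre : (realForm (logFactors y) ((r : ℂ), (r : ℂ), (r : ℂ))).re =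
      ((logFactors y).1 + ((logFactors y).2.1 + (logFactors y).2.2)) * r := by
    simp [realForm_apply, add_mul]
  rw [hre]
  linarith [mul_le_mul_of_nonneg_right hnorm hr]

lemma norm_weight_div_le (p : ℂ × ℂ × ℂ) (y : ι → ℝ) (i j : ι) :
    ‖weight p y / (y i - y j)‖ ≤ ‖weight (p - (0, 0, 1)) y‖ := by
  by_cases hy : y ∈ genericCube ι
  · rcases eq_or_ne i j with rfl | hij
    · simp
    have hpos := abs_sub_pos_of_mem_genericCube hy hij
    have hlog : (logFactors y).2.2 ≤ Real.log |y i - y j| := by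
      have hle := Finset.single_le_sum (f := fun q : ι × ι => -Real.log |y q.1 - y q.2|)
        (fun q _ => neg_nonneg.2 (Real.log_nonpos (abs_nonneg _)
          (abs_sub_le_one_of_mem_genericCube hy q.1 q.2)))
        (a := (i, j)) (Finset.mem_offDiag.2 ⟨Finset.mem_univ i, Finset.mem_univ j, hij⟩)
      rw [Finset.sum_neg_distrib] at hle
      exact neg_le_neg_iff.1 hle
    rw [norm_div, ← ofReal_sub, norm_real, Real.norm_eq_abs, weight_eq_cexp p hy,
      weight_eq_cexp _ hy, norm_exp, norm_exp, ← Real.exp_log hpos, ← Real.exp_sub,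
      Real.exp_le_exp, map_sub, sub_re]
    have hre : (realForm (logFactors y) (0, 0, 1)).re = (logFactors y).2.2 := by
      simp [realForm_apply]
    linarith
  · simp [weight_eq_zero_of_notMem p hy]

end LogForm

section CubeIntegral

variable {ι : Type*} [Fintype ι]

/-- The integral of `f` against the symmetric Selberg weight over the unit cube. -/
def cubeIntegral (f : MvPolynomial ι ℂ) (p : ℂ × ℂ × ℂ) : ℂ := ∫ y, evalReal y f * weight p y

/-- `cubeIntegral` as a linear functional, on the half space where the integrals converge. -/
def cubeFunctional {p : ℂ × ℂ × ℂ} (hp : p ∈ halfSpace (-1, -1, 0)) :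
    MvPolynomial ι ℂ →ₗ[ℂ] ℂ where
  toFun f := cubeIntegral f p
  map_add' f g := by
    rw [cubeIntegral, cubeIntegral, cubeIntegral, ← integral_add
      (integrable_evalReal_mul_weight f hp) (integrable_evalReal_mul_weight g hp)]
    simp only [map_add, add_mul]
  map_smul' a f := by
    simp only [cubeIntegral, smul_eq_C_mul, map_mul, mul_assoc, evalReal, eval_C,
      integral_const_mul, RingHom.id_apply, smul_eq_mul]

lemma cubeFunctional_apply {p : ℂ × ℂ × ℂ} (hp : p ∈ halfSpace (-1, -1, 0))
    (f : MvPolynomial ι ℂ) : cubeFunctional hp f = cubeIntegral f p := rfl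

lemma cubeIntegral_eq_setIntegral (f : MvPolynomial ι ℂ) (p : ℂ × ℂ × ℂ) :
    cubeIntegral f p =
      ∫ y in genericCube ι, evalReal y f * cexp (realForm (logFactors y) p) := by
  rw [cubeIntegral, ← setIntegral_eq_integral_of_forall_compl_eq_zero (s := genericCube ι)
    fun y hy => by rw [weight_eq_zero_of_notMem p hy, mul_zero]]
  exact setIntegral_congr_fun measurableSet_genericCube fun y hy => by
    simp only [weight_eq_cexp p hy]

theorem analyticOnNhd_cubeIntegral (f : MvPolynomial ι ℂ) :
    AnalyticOnNhd ℂ (cubeIntegral f) (halfSpace (-1, -1, 0)) := by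
  intro p hp
  obtain ⟨r, hpr, hr⟩ : ∃ r : ℝ, p - ((r : ℂ), (r : ℂ), (r : ℂ)) ∈ halfSpace (-1, -1, 0) ∧
      0 < r := by
    have hcont : Continuous fun r : ℝ => p - ((r : ℂ), (r : ℂ), (r : ℂ)) := by fun_prop
    have hev : ∀ᶠ r : ℝ in nhds 0, p - ((r : ℂ), (r : ℂ), (r : ℂ)) ∈ halfSpace (-1, -1, 0) :=
      hcont.continuousAt.eventually_mem ((isOpen_halfSpace _).mem_nhds
        (by simpa only [ofReal_zero, Prod.mk_zero_zero, sub_zero] using hp))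
    exact ((hev.filter_mono nhdsWithin_le_nhds).and (self_mem_nhdsWithin (s := Set.Ioi 0))).exists
  simp only [funext (cubeIntegral_eq_setIntegral f)]
  refine analyticAt_integral_mul_cexp (r := ⟨r, hr.le⟩) hr
    (continuous_evalReal f).aestronglyMeasurable
    (continuous_realForm.comp_aestronglyMeasurable
      measurable_logFactors.aestronglyMeasurable) ?_
  refine (integrable_evalReal_mul_weight f hpr).norm.integrableOn.mono' ?_ ?_
  · have hf := (continuous_evalReal f).measurable
    have hℓ : Measurable fun y : ι → ℝ => realForm (logFactors y) :=
      continuous_realForm.measurable.comp measurable_logFactors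
    have hℓp := hℓ.apply_continuousLinearMap p
    exact Measurable.aestronglyMeasurable (by fun_prop)
  · filter_upwards [ae_restrict_mem measurableSet_genericCube] with y hy
    rw [Real.norm_of_nonneg (by positivity), ← weight_eq_cexp p hy, norm_mul, norm_mul, mul_assoc]
    exact mul_le_mul_of_nonneg_left (norm_weight_mul_exp_le hr.le hy) (norm_nonneg _)

lemma cubeIntegral_add_one_fst (f : MvPolynomial ι ℂ) (p : ℂ × ℂ × ℂ) :
    cubeIntegral f (p + (1, 0, 0)) = cubeIntegral ((∏ i, X i) * f) p := by
  simp only [cubeIntegral, weight, Prod.fst_add, Prod.snd_add, posPow_add_one, add_zero, evalReal,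
    map_mul, map_prod, eval_X, Finset.prod_mul_distrib]
  congr! 2 with y
  ring

lemma cubeIntegral_add_one_snd (f : MvPolynomial ι ℂ) (p : ℂ × ℂ × ℂ) :
    cubeIntegral f (p + (0, 1, 0)) = cubeIntegral ((∏ i, (1 - X i)) * f) p := by
  simp only [cubeIntegral, weight, Prod.fst_add, Prod.snd_add, posPow_add_one, add_zero, evalReal,
    map_mul, map_prod, map_sub, map_one, eval_X, Finset.prod_mul_distrib, ofReal_sub, ofReal_one]
  congr! 2 with y
  ring

lemma cubeIntegral_add_two_thd (f : MvPolynomial ι ℂ) (p : ℂ × ℂ × ℂ) :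
    cubeIntegral f (p + (0, 0, 2)) = cubeIntegral (diffProd ι ℂ ^ 2 * f) p := by
  simp only [cubeIntegral, weight, Prod.fst_add, Prod.snd_add, posPow_add_two_abs, add_zero,
    evalReal, diffProd, map_mul, map_pow, map_prod, map_sub, eval_X, Finset.prod_mul_distrib,
    Finset.prod_pow, ofReal_sub]
  congr! 2 with y
  ring

lemma cubeIntegral_wallProd_pow_mul (M : ℕ) (f : MvPolynomial ι ℂ) (p : ℂ × ℂ × ℂ) :
    cubeIntegral (wallProd ι ℂ ^ M * f) p = cubeIntegral f (p + ((M : ℂ), (M : ℂ), 0)) := by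
  induction M generalizing f with
  | zero => simp [Prod.mk_zero_zero]
  | succ M ih =>
    rw [pow_succ, mul_assoc, ih, wallProd, Finset.prod_mul_distrib, mul_assoc,
      ← cubeIntegral_add_one_fst, ← cubeIntegral_add_one_snd]
    simp [add_assoc]

lemma weight_comp_perm (p : ℂ × ℂ × ℂ) (σ : Equiv.Perm ι) (y : ι → ℝ) :
    weight p (y ∘ σ) = weight p y := by
  refine congr_arg₂ (· * ·)
    (Equiv.prod_comp σ fun i => posPow p.1 (y i) * posPow p.2.1 (1 - y i))
    (Finset.prod_equiv (σ.prodCongr σ) ?_ ?_)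
  · simp
  · simp

lemma measurePreserving_comp_perm (σ : Equiv.Perm ι) :
    MeasurePreserving fun y : ι → ℝ => y ∘ σ :=
  volume_preserving_arrowCongr' σ.symm (MeasurableEquiv.refl ℝ) (MeasurePreserving.id _)

lemma integral_comp_perm (σ : Equiv.Perm ι) (F : (ι → ℝ) → ℂ) :
    ∫ y, F (y ∘ σ) = ∫ y, F y :=
  (measurePreserving_comp_perm σ).integral_comp
    (MeasurableEquiv.arrowCongr' σ.symm (MeasurableEquiv.refl ℝ)).measurableEmbedding F

lemma cubeIntegral_swapVars [DecidableEq ι] (i j : ι) (f : MvPolynomial ι ℂ) (p : ℂ × ℂ × ℂ) :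
    cubeIntegral (swapVars i j f) p = cubeIntegral f p := by
  simp only [cubeIntegral, evalReal_swapVars]
  rw [← integral_comp_perm (Equiv.swap i j) fun y => evalReal y f * weight p y]
  simp only [weight_comp_perm]

end CubeIntegral

section LogDeriv

/-- `u` has logarithmic derivative `l` at `x`, in the multiplied-out form `u' = l * u`, which makes
sense at zeros of `u`. -/
def HasLogDerivAt (u : ℝ → ℂ) (l : ℂ) (x : ℝ) : Prop := HasDerivAt u (l * u x) x

lemma HasLogDerivAt.mul {u v : ℝ → ℂ} {l m : ℂ} {x : ℝ} (hu : HasLogDerivAt u l x)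
    (hv : HasLogDerivAt v m x) : HasLogDerivAt (fun t => u t * v t) (l + m) x :=
  (HasDerivAt.mul hu hv).congr_deriv (by ring)

lemma HasLogDerivAt.finset_prod {κ : Type*} (s : Finset κ) {u : κ → ℝ → ℂ} {l : κ → ℂ} {x : ℝ}
    (h : ∀ k ∈ s, HasLogDerivAt (u k) (l k) x) :
    HasLogDerivAt (fun t => ∏ k ∈ s, u k t) (∑ k ∈ s, l k) x := by
  classical
  induction s using Finset.induction_on with
  | empty => simpa [HasLogDerivAt] using hasDerivAt_const x (1 : ℂ)
  | insert k s hk ih =>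
    simp only [Finset.prod_insert hk, Finset.sum_insert hk]
    exact (h k (Finset.mem_insert_self k s)).mul
      (ih fun i hi => h i (Finset.mem_insert_of_mem hi))

lemma HasLogDerivAt.comp_affine {u : ℝ → ℂ} {l : ℂ} {a : ℝ} (hu : HasLogDerivAt u l a) (v : ℝ) :
    HasLogDerivAt (fun t => u (a + t * v)) (v * l) 0 := by
  have hline : HasDerivAt (fun t : ℝ => a + t * v) v 0 := by
    simpa using ((hasDerivAt_id (0 : ℝ)).mul_const v).const_add a
  have hu' : HasDerivAt u (l * u a) (a + 0 * v) := by simpa [HasLogDerivAt] using hu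
  exact (hu'.scomp 0 hline).congr_deriv (by simp [mul_assoc])

lemma hasDerivAt_posPow_zero {s : ℂ} (hs : 1 < s.re) : HasDerivAt (posPow s) 0 0 := by
  have hlim : Filter.Tendsto (fun t : ℝ => |t| ^ (s.re - 1)) (nhds 0) (nhds 0) := by
    have hcont : Continuous fun t : ℝ => |t| ^ (s.re - 1) :=
      continuous_abs.rpow_const fun _ => .inr (by linarith)
    simpa [Real.zero_rpow (sub_pos.2 hs).ne'] using hcont.tendsto 0
  rw [hasDerivAt_iff_isLittleO_nhds_zero, Asymptotics.isLittleO_iff]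
  intro c hc
  filter_upwards [hlim (Iio_mem_nhds hc)] with t ht
  rw [zero_add, posPow_of_nonpos s le_rfl, smul_zero, sub_zero, sub_zero]
  calc ‖posPow s t‖ ≤ |t| ^ (s.re - 1 + 1) := by simpa using norm_posPow_le s t
    _ = |t| ^ (s.re - 1) * |t| := Real.rpow_add_one' (abs_nonneg t) (by linarith)
    _ ≤ c * ‖t‖ := mul_le_mul_of_nonneg_right (le_of_lt ht) (abs_nonneg t)

lemma hasLogDerivAt_posPow {s : ℂ} (hs : 1 < s.re) (t : ℝ) :
    HasLogDerivAt (posPow s) (s / t) t := by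
  unfold HasLogDerivAt
  rcases lt_trichotomy t 0 with ht | rfl | ht
  · rw [posPow_of_nonpos s ht.le, mul_zero]
    refine (hasDerivAt_const t (0 : ℂ)).congr_of_eventuallyEq ?_
    filter_upwards [Iio_mem_nhds ht] with u hu
    exact posPow_of_nonpos s (le_of_lt hu)
  · simpa using hasDerivAt_posPow_zero hs
  · have ht0 : (t : ℂ) ≠ 0 := ofReal_ne_zero.2 ht.ne'
    have hderiv := ((hasDerivAt_id (t : ℂ)).cpow_const (c := s) (.inl ht)).comp_ofReal
    have heq : s / t * posPow s t = s * id (t : ℂ) ^ (s - 1) * 1 := by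
      rw [posPow_of_pos s ht, id, cpow_sub _ _ ht0, cpow_one]
      ring
    rw [heq]
    refine hderiv.congr_of_eventuallyEq ?_
    filter_upwards [Ioi_mem_nhds ht] with u hu
    exact posPow_of_pos s hu

lemma hasLogDerivAt_posPow_abs {s : ℂ} (hs : 1 < s.re) (t : ℝ) :
    HasLogDerivAt (fun t => posPow s |t|) (s / t) t := by
  simp only [posPow_abs, HasLogDerivAt]
  refine (HasDerivAt.add (hasLogDerivAt_posPow hs t)
    (HasDerivAt.scomp t (hasLogDerivAt_posPow hs (-t)) (hasDerivAt_neg t))).congr_deriv ?_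
  rw [mul_add, ofReal_neg, div_neg, neg_smul, one_smul, neg_mul, neg_neg]

lemma hasDerivAt_evalReal_line {ι : Type*} [DecidableEq ι] (i : ι) (y : ι → ℝ)
    (f : MvPolynomial ι ℂ) :
    HasDerivAt (fun t : ℝ => evalReal (y + t • Pi.single i 1) f) (evalReal y (pderiv i f)) 0 := by
  induction f using MvPolynomial.induction_on with
  | C a => simpa [evalReal] using hasDerivAt_const (0 : ℝ) a
  | add f g hf hg => simpa only [map_add] using hf.fun_add hg
  | mul_X f k hf =>
    have hX : HasDerivAt (fun t : ℝ => evalReal (y + t • Pi.single i 1) (X k))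
        (evalReal y (pderiv i (X k))) 0 := by
      have hline := ((hasDerivAt_id (0 : ℝ)).mul_const ((Pi.single i 1 : ι → ℝ) k)).const_add (y k)
      simpa [evalReal, pderiv_X, Pi.single_apply, apply_ite] using hline.ofReal_comp
    simp only [map_mul]
    refine (hf.fun_mul hX).congr_deriv ?_
    rw [Derivation.leibniz, map_add, smul_eq_mul, smul_eq_mul, map_mul, map_mul, zero_smul,
      add_zero]
    ring

end LogDeriv

section IntegrationByParts

variable {ι : Type*} [Fintype ι]

lemma hasLogDerivAt_weight_line {p : ℂ × ℂ × ℂ} (hp : p ∈ halfSpace (1, 1, 1)) (y v : ι → ℝ) :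
    HasLogDerivAt (fun t => weight p (y + t • v))
      (∑ k, v k * (p.1 / y k - p.2.1 / (1 - y k)) +
        ∑ q ∈ (Finset.univ : Finset ι).offDiag,
          (v q.1 - v q.2) * (p.2.2 / (y q.1 - y q.2))) 0 := by
  refine .mul (.finset_prod _ fun k _ => ?_) (.finset_prod _ fun q _ => ?_)
  · convert ((hasLogDerivAt_posPow hp.1 (y k)).comp_affine (v k)).mul
      ((hasLogDerivAt_posPow hp.2.1 (1 - y k)).comp_affine (-v k)) using 1
    · ext t
      simp only [Pi.add_apply, Pi.smul_apply, smul_eq_mul]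
      ring_nf
    · push_cast
      ring
  · convert (hasLogDerivAt_posPow_abs hp.2.2 (y q.1 - y q.2)).comp_affine (v q.1 - v q.2) using 1
    · ext t
      simp only [Pi.add_apply, Pi.smul_apply, smul_eq_mul]
      ring_nf
    · push_cast
      ring

lemma integrable_evalReal_mul_weight_div (f : MvPolynomial ι ℂ) {p : ℂ × ℂ × ℂ}
    (hp : p ∈ halfSpace (1, 1, 1)) (i j : ι) :
    Integrable fun y => evalReal y f * (weight p y / (y i - y j)) := by
  have hp' : p - (0, 0, 1) ∈ halfSpace (-1, -1, 0) := by
    rw [mem_halfSpace] at hp ⊢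
    norm_num
    constructorm* _ ∧ _ <;> linarith
  refine (integrable_evalReal_mul_weight f hp').mono ?_ (.of_forall fun y => ?_)
  · have hf := (continuous_evalReal f).measurable
    have hw := measurable_weight (ι := ι) p
    exact Measurable.aestronglyMeasurable (by fun_prop)
  · rw [norm_mul, norm_mul]
    exact mul_le_mul_of_nonneg_left (norm_weight_div_le p y i j) (norm_nonneg _)

/-- The derivative of `X i * (1 - X i) * f * weight p` in the direction `i`; the factor
`X i * (1 - X i)` cancels the poles on the walls of the cube. -/
def weightedDeriv (p : ℂ × ℂ × ℂ) (i : ι) (f : MvPolynomial ι ℂ) (y : ι → ℝ) : ℂ :=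
  evalReal y (pderiv i (X i * (1 - X i) * f) + (C p.1 * (1 - X i) - C p.2.1 * X i) * f) *
      weight p y +
    ∑ j, p.2.2 * (2 * (evalReal y (X i * (1 - X i) * f) * (weight p y / (y i - y j))))

lemma integrable_weightedDeriv {p : ℂ × ℂ × ℂ} (hp : p ∈ halfSpace (1, 1, 1)) (i : ι)
    (f : MvPolynomial ι ℂ) : Integrable (weightedDeriv p i f) :=
  (integrable_evalReal_mul_weight _ (halfSpace_anti (by norm_num) hp)).add
    (integrable_finsetSum _ fun j _ =>
      ((integrable_evalReal_mul_weight_div _ hp i j).const_mul 2).const_mul p.2.2)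

variable [DecidableEq ι]

-- The terms with equal indices are `0`, by the convention `x / 0 = 0`.
lemma sum_offDiag_single_sub_mul_div (γ : ℂ) (z : ι → ℂ) (i : ι) :
    ∑ q ∈ (Finset.univ : Finset ι).offDiag,
        ((Pi.single i 1 : ι → ℂ) q.1 - (Pi.single i 1 : ι → ℂ) q.2) * (γ / (z q.1 - z q.2)) =
      ∑ j, 2 * γ / (z i - z j) := by
  have hdiag : ∀ q ∉ (Finset.univ : Finset ι).offDiag,
      ((Pi.single i 1 : ι → ℂ) q.1 - (Pi.single i 1 : ι → ℂ) q.2) * (γ / (z q.1 - z q.2)) = 0 := by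
    intro q hq
    have hq' : q.1 = q.2 := by simpa using hq
    rw [hq', sub_self, zero_mul]
  rw [Finset.sum_subset (Finset.subset_univ _) fun q _ => hdiag q, Fintype.sum_prod_type]
  simp only [sub_mul, Finset.sum_sub_distrib, ← Finset.mul_sum]
  simp only [Pi.single_apply, ite_mul, one_mul, zero_mul, Finset.sum_ite_eq', Finset.mem_univ,
    if_true]
  rw [← Finset.sum_sub_distrib]
  refine Finset.sum_congr rfl fun j _ => ?_
  rw [← neg_sub (z i) (z j), div_neg]
  ring

lemma hasLogDerivAt_weight_coord {p : ℂ × ℂ × ℂ} (hp : p ∈ halfSpace (1, 1, 1)) (y : ι → ℝ)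
    (i : ι) :
    HasLogDerivAt (fun t => weight p (y + t • Pi.single i 1))
      (p.1 / y i - p.2.1 / (1 - y i) + ∑ j, 2 * p.2.2 / (y i - y j)) 0 := by
  have hcast (k : ι) : (((Pi.single i 1 : ι → ℝ) k : ℝ) : ℂ) = (Pi.single i 1 : ι → ℂ) k := by
    simp [Pi.single_apply, apply_ite]
  have h := hasLogDerivAt_weight_line hp y (Pi.single i 1)
  simp only [hcast] at h
  rw [sum_offDiag_single_sub_mul_div p.2.2 fun k => (y k : ℂ)] at h
  simpa [Pi.single_apply] using h

lemma evalReal_sub_swap_mul_weight_div (f : MvPolynomial ι ℂ) (p : ℂ × ℂ × ℂ) (i j : ι)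
    (y : ι → ℝ) :
    (evalReal y f - evalReal y (swapVars i j f)) * (weight p y / (y i - y j)) =
      evalReal y (divDiff i j f) * weight p y := by
  by_cases hy : y ∈ genericCube ι
  · rcases eq_or_ne i j with rfl | hij
    · simp [divDiff_self]
    have hne : (y i : ℂ) - y j ≠ 0 := sub_ne_zero.2 (ofReal_injective.ne (hy.2.ne hij))
    rw [← map_sub, ← X_sub_X_mul_divDiff, map_mul]
    simp only [evalReal, map_sub, eval_X]
    field_simp
  · simp [weight_eq_zero_of_notMem p hy]

lemma two_mul_integral_weight_div {p : ℂ × ℂ × ℂ} (hp : p ∈ halfSpace (1, 1, 1)) (i j : ι)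
    (f : MvPolynomial ι ℂ) :
    2 * ∫ y, evalReal y f * (weight p y / (y i - y j)) = cubeIntegral (divDiff i j f) p := by
  have hswap : ∫ y, evalReal y (swapVars i j f) * (weight p y / (y i - y j)) =
      -∫ y, evalReal y f * (weight p y / (y i - y j)) := by
    rw [← integral_comp_perm (Equiv.swap i j) fun y => evalReal y f * (weight p y / (y i - y j)),
      ← integral_neg]
    refine integral_congr_ae (.of_forall fun y => ?_)
    simp only [evalReal_swapVars, weight_comp_perm, Function.comp_apply, Equiv.swap_apply_left,
      Equiv.swap_apply_right]
    rw [← neg_sub (y i : ℂ) (y j), div_neg, mul_neg, neg_neg]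
  simp only [cubeIntegral, ← evalReal_sub_swap_mul_weight_div, sub_mul]
  rw [integral_sub (integrable_evalReal_mul_weight_div f hp i j)
    (integrable_evalReal_mul_weight_div _ hp i j), hswap, sub_neg_eq_add, two_mul]

lemma hasLineDerivAt_evalReal_mul_weight {p : ℂ × ℂ × ℂ} (hp : p ∈ halfSpace (1, 1, 1)) (i : ι)
    (f : MvPolynomial ι ℂ) (y : ι → ℝ) :
    HasLineDerivAt ℝ (fun y => evalReal y (X i * (1 - X i) * f) * weight p y)
      (weightedDeriv p i f y) y (Pi.single i 1) := by
  refine ((hasDerivAt_evalReal_line i y (X i * (1 - X i) * f)).mul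
    (hasLogDerivAt_weight_coord hp y i)).congr_deriv ?_
  simp only [zero_smul, add_zero, weightedDeriv]
  by_cases hy : y ∈ genericCube ι
  · have hpole : evalReal y (X i * (1 - X i) * f) * (p.1 / y i - p.2.1 / (1 - y i)) =
        evalReal y ((C p.1 * (1 - X i) - C p.2.1 * X i) * f) := by
      have hy0 : (y i : ℂ) ≠ 0 := ofReal_ne_zero.2 (hy.1 i).1.ne'
      have hy1 : (1 : ℂ) - y i ≠ 0 := by
        rw [← ofReal_one, ← ofReal_sub]
        exact ofReal_ne_zero.2 (sub_pos.2 (hy.1 i).2).ne'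
      simp only [evalReal, map_mul, map_sub, map_one, eval_X, eval_C]
      field_simp
    have hsum : ∑ j, p.2.2 * (2 * (evalReal y (X i * (1 - X i) * f) *
          (weight p y / (y i - y j)))) =
        evalReal y (X i * (1 - X i) * f) * (∑ j, 2 * p.2.2 / (y i - y j)) * weight p y := by
      rw [Finset.mul_sum, Finset.sum_mul]
      exact Finset.sum_congr rfl fun j _ => by ring
    rw [hsum, map_add, ← hpole]
    ring
  · simp [weight_eq_zero_of_notMem p hy]

lemma integral_weightedDeriv {p : ℂ × ℂ × ℂ} (hp : p ∈ halfSpace (1, 1, 1)) (i : ι)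
    (f : MvPolynomial ι ℂ) :
    ∫ y, weightedDeriv p i f y = cubeIntegral (weightedDunkl p.1 p.2.1 p.2.2 i f) p := by
  have hp' : p ∈ halfSpace (-1, -1, 0) := halfSpace_anti (by norm_num) hp
  have hexpand : weightedDunkl p.1 p.2.1 p.2.2 i f =
      (pderiv i (X i * (1 - X i) * f) + (C p.1 * (1 - X i) - C p.2.1 * X i) * f) +
        ∑ j, p.2.2 • divDiff i j (X i * (1 - X i) * f) := by
    rw [weightedDunkl, dunkl_apply, ← Finset.smul_sum, smul_eq_C_mul]
    ring
  have hInt (j : ι) := ((integrable_evalReal_mul_weight_div (X i * (1 - X i) * f) hp i j).const_mul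
    2).const_mul p.2.2
  simp only [weightedDeriv]
  rw [integral_add (integrable_evalReal_mul_weight _ hp')
      (integrable_finsetSum _ fun j _ => hInt j),
    integral_finsetSum _ fun j _ => hInt j, hexpand, ← cubeFunctional_apply hp', map_add, map_sum]
  simp only [integral_const_mul, two_mul_integral_weight_div hp, map_smul, cubeFunctional_apply,
    smul_eq_mul]
  rfl

theorem cubeIntegral_weightedDunkl {p : ℂ × ℂ × ℂ} (hp : p ∈ halfSpace (1, 1, 1)) (i : ι)
    (f : MvPolynomial ι ℂ) : cubeIntegral (weightedDunkl p.1 p.2.1 p.2.2 i f) p = 0 := by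
  have hInt := integrable_evalReal_mul_weight (X i * (1 - X i) * f)
    (halfSpace_anti (by norm_num) hp)
  have hparts := integral_bilinear_hasLineDerivAt_right_eq_neg_left_of_integrable
    (μ := volume) (g := fun _ => (1 : ℂ)) (g' := fun _ => 0) (B := ContinuousLinearMap.mul ℝ ℂ)
    (by simpa using integrable_weightedDeriv hp i f) (by simp) (by simpa using hInt)
    (fun y _ => hasLineDerivAt_evalReal_mul_weight hp i f y)
    (fun y _ => by simpa [HasLineDerivAt] using hasDerivAt_const (0 : ℝ) (1 : ℂ))
  simp only [ContinuousLinearMap.mul_apply', mul_zero, integral_zero, mul_one] at hparts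
  rw [← integral_weightedDeriv hp]
  exact neg_eq_zero.1 hparts.symm

end IntegrationByParts

section ParamEval

/-- Evaluation of a polynomial in the three parameters at `p = (α, β, γ)`; the variables `X 0`,
`X 1`, `X 2` stand for `α`, `β`, `γ`. -/
def paramEval (p : ℂ × ℂ × ℂ) : MvPolynomial (Fin 3) ℂ →+* ℂ := eval ![p.1, p.2.1, p.2.2]

lemma paramEval_X_zero (p : ℂ × ℂ × ℂ) : paramEval p (X 0) = p.1 := eval_X 0

lemma paramEval_X_one (p : ℂ × ℂ × ℂ) : paramEval p (X 1) = p.2.1 := eval_X 1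

lemma paramEval_X_two (p : ℂ × ℂ × ℂ) : paramEval p (X 2) = p.2.2 := eval_X 2

lemma analyticOnNhd_paramEval (c : MvPolynomial (Fin 3) ℂ) :
    AnalyticOnNhd ℂ (fun p => paramEval p c) Set.univ := by
  refine AnalyticOnNhd.aeval_mvPolynomial
    (f := fun p : ℂ × ℂ × ℂ => (![p.1, p.2.1, p.2.2] : Fin 3 → ℂ)) (fun i p _ => ?_) c
  fin_cases i
  · exact analyticAt_fst
  · exact (analyticAt_fst (p := p.2)).comp analyticAt_snd
  · exact (analyticAt_snd (p := p.2)).comp analyticAt_snd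

lemma map_paramEval_map_C {ι : Type*} (p : ℂ × ℂ × ℂ) (f : MvPolynomial ι ℂ) :
    map (paramEval p) (map C f) = f := by
  have hid : (paramEval p).comp C = RingHom.id ℂ := RingHom.ext fun _ => eval_C _
  rw [map_map, hid, map_id]

lemma paramEval_prod_add_natCast_mul (p : ℂ × ℂ × ℂ) (i : Fin 3) (n : ℕ) :
    paramEval p (∏ m ∈ Finset.range n, (X i + 1 + (m : MvPolynomial (Fin 3) ℂ) * X 2)) =
      ∏ m ∈ Finset.range n, (paramEval p (X i) + 1 + m * p.2.2) := by
  simp only [map_prod, map_add, map_mul, map_one, map_natCast, paramEval_X_two]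

end ParamEval

section Nonvanishing

variable {n : ℕ} {p : ℂ × ℂ × ℂ}

lemma prod_fst_add_ne_zero (hp : p ∈ (setAhat n)ᶜ) :
    ∏ m ∈ Finset.range n, (p.1 + 1 + m * p.2.2) ≠ 0 := by
  refine Finset.prod_ne_zero_iff.2 fun m hm h => hp ?_
  refine Or.inl ⟨m + 1, by lia, Finset.mem_range.1 hm, Or.inl ⟨-1, ?_⟩⟩
  push_cast
  linear_combination h

lemma prod_snd_add_ne_zero (hp : p ∈ (setAhat n)ᶜ) :
    ∏ m ∈ Finset.range n, (p.2.1 + 1 + m * p.2.2) ≠ 0 := by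
  refine Finset.prod_ne_zero_iff.2 fun m hm h => hp ?_
  refine Or.inl ⟨m + 1, by lia, Finset.mem_range.1 hm, Or.inr ⟨-1, ?_⟩⟩
  push_cast
  linear_combination h

lemma isNonsingularParam_of_notMem_setAhat {ι : Type*} [Fintype ι]
    (hp : p ∈ (setAhat (Fintype.card ι))ᶜ) : IsNonsingularParam ι p.2.2 := by
  intro t h2 ht v _ h
  obtain ⟨j, rfl⟩ := Nat.exists_eq_add_of_le' (show 1 ≤ t by lia)
  refine hp (Or.inr ⟨j, by lia, by lia, -v, ?_⟩)
  push_cast at h ⊢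
  linear_combination h

end Nonvanishing

section RelationModule

variable {ι : Type*} [Fintype ι]

lemma halfSpace_one_subset : halfSpace (1, 1, 1) ⊆ halfSpace (-1, -1, 0) :=
  halfSpace_anti (by norm_num [Prod.le_def])

variable (ι) in
/-- The polynomials with coefficients in `ℂ[α, β, γ]` whose integral against the Selberg weight
with exponents `α, β, γ` vanishes identically on the half space `halfSpace (1, 1, 1)`. -/
def relationModule :
    Submodule (MvPolynomial (Fin 3) ℂ) (MvPolynomial ι (MvPolynomial (Fin 3) ℂ)) where
  carrier := {F | ∀ p ∈ halfSpace (1, 1, 1), cubeIntegral (map (paramEval p) F) p = 0}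
  zero_mem' p hp := by
    rw [map_zero, ← cubeFunctional_apply (halfSpace_one_subset hp), map_zero]
  add_mem' hF hG p hp := by
    rw [map_add, ← cubeFunctional_apply (halfSpace_one_subset hp), map_add, cubeFunctional_apply,
      cubeFunctional_apply, hF p hp, hG p hp, add_zero]
  smul_mem' c F hF p hp := by
    rw [smul_eq_C_mul, map_mul, map_C, ← smul_eq_C_mul,
      ← cubeFunctional_apply (halfSpace_one_subset hp), map_smul, cubeFunctional_apply, hF p hp,
      smul_zero]

lemma isRelationModule_relationModule [DecidableEq ι] :
    IsRelationModule (relationModule ι) (X 0) (X 1) (X 2) where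
  sub_swapVars_mem i j f p hp := by
    have hmap : map (paramEval p) (swapVars i j f) = swapVars i j (map (paramEval p) f) :=
      map_rename _ _ _
    rw [map_sub, hmap, ← cubeFunctional_apply (halfSpace_one_subset hp), map_sub,
      cubeFunctional_apply, cubeFunctional_apply, cubeIntegral_swapVars, sub_self]
  weightedDunkl_mem i f p hp := by
    have hmap : map (paramEval p) (weightedDunkl (X 0) (X 1) (X 2) i f) =
        weightedDunkl p.1 p.2.1 p.2.2 i (map (paramEval p) f) := by
      simp only [weightedDunkl, map_add, map_sub, map_mul, map_dunkl, map_C, map_X, map_one,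
        paramEval_X_zero, paramEval_X_one, paramEval_X_two]
    rw [hmap, cubeIntegral_weightedDunkl hp]

lemma paramEval_mul_cubeIntegral {c : MvPolynomial (Fin 3) ℂ} {f D : MvPolynomial ι ℂ}
    {g : MvPolynomial ι (MvPolynomial (Fin 3) ℂ)}
    (h : C c * map C f - map C D * g ∈ relationModule ι) {p : ℂ × ℂ × ℂ}
    (hp : p ∈ halfSpace (1, 1, 1)) :
    paramEval p c * cubeIntegral f p = cubeIntegral (D * map (paramEval p) g) p := by
  have hzero := h p hp
  rwa [map_sub, map_mul, map_mul, map_C, map_paramEval_map_C, map_paramEval_map_C, ← smul_eq_C_mul,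
    ← cubeFunctional_apply (halfSpace_one_subset hp), map_sub, map_smul, smul_eq_mul,
    cubeFunctional_apply, cubeFunctional_apply, sub_eq_zero] at hzero

lemma cubeIntegral_map_paramEval (g : MvPolynomial ι (MvPolynomial (Fin 3) ℂ)) (p : ℂ × ℂ × ℂ)
    {q : ℂ × ℂ × ℂ} (hq : q ∈ halfSpace (-1, -1, 0)) :
    cubeIntegral (map (paramEval p) g) q =
      ∑ ν ∈ g.support, paramEval p (coeff ν g) * cubeIntegral (monomial ν 1) q := by
  conv_lhs => rw [g.as_sum, map_sum, ← cubeFunctional_apply hq, map_sum]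
  refine Finset.sum_congr rfl fun ν _ => ?_
  rw [map_monomial, ← mul_one (paramEval p _), ← smul_eq_mul, ← smul_monomial, map_smul,
    cubeFunctional_apply, smul_eq_mul, smul_eq_mul, mul_one]

end RelationModule

section ShiftRelations

variable {ι : Type*} [Fintype ι]

variable (ι) in
/-- Off `setAhat`, every integral `cubeIntegral f p` can locally be recovered from the integrals of
finitely many monomials at the shifted parameter `p + (k, l, m)`, with entire coefficients. -/
def HasShiftRelations (k l m : ℤ) : Prop :=
  ∀ (f : MvPolynomial ι ℂ), ∀ p₀ ∈ (setAhat (Fintype.card ι))ᶜ,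
    ∃ (b : ℝ × ℝ × ℝ) (c : ℂ × ℂ × ℂ → ℂ) (s : Finset (ι →₀ ℕ)) (e : (ι →₀ ℕ) → ℂ × ℂ × ℂ → ℂ),
      AnalyticOnNhd ℂ c Set.univ ∧ c p₀ ≠ 0 ∧ (∀ ν, AnalyticOnNhd ℂ (e ν) Set.univ) ∧
      Set.EqOn (fun p => c p * cubeIntegral f p)
        (fun p => ∑ ν ∈ s, e ν p * cubeIntegral (monomial ν 1) (p + ((k : ℂ), (l : ℂ), (m : ℂ))))
        (halfSpace b)

lemma hasShiftRelations_of_forall_exists_mem {M k l m : ℕ} {D : MvPolynomial ι ℂ}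
    (hD : ∀ f p, cubeIntegral f (p + ((k : ℂ), (l : ℂ), (m : ℂ))) = cubeIntegral (D * f) p)
    (h : ∀ p₀ ∈ (setAhat (Fintype.card ι))ᶜ, ∃ c, paramEval p₀ c ≠ 0 ∧
      ∀ f, ∃ g, C c * map C (wallProd ι ℂ ^ M * f) - map C D * g ∈ relationModule ι) :
    HasShiftRelations ι (k - M) (l - M) m := by
  intro f p₀ hp₀
  set s : ℂ × ℂ × ℂ := (((-M : ℤ) : ℂ), ((-M : ℤ) : ℂ), ((0 : ℤ) : ℂ)) with hs
  obtain ⟨c, hc, hmem⟩ := h (p₀ + s) ((add_intCast_mem_setAhat_iff _ _ _).not.2 hp₀)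
  obtain ⟨g, hg⟩ := hmem f
  have hana (r : MvPolynomial (Fin 3) ℂ) :
      AnalyticOnNhd ℂ (fun p => paramEval (p + s) r) Set.univ := fun p _ =>
    (analyticOnNhd_paramEval r (p + s) trivial).comp (f := fun p => p + s) (by fun_prop)
  refine ⟨(M + 1, M + 1, 1), fun p => paramEval (p + s) c, g.support,
    fun ν p => paramEval (p + s) (coeff ν g), hana c, hc, fun ν => hana _, fun p hp => ?_⟩
  have hps : p + s ∈ halfSpace (1, 1, 1) := by
    obtain ⟨h₁, h₂, h₃⟩ := hp
    refine ⟨?_, ?_, ?_⟩ <;> simp [hs] <;> linarith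
  have hback : p + s + ((M : ℂ), (M : ℂ), 0) = p := by ext <;> simp [hs]
  have hshift : p + s + ((k : ℂ), (l : ℂ), (m : ℂ)) =
      p + (((k - M : ℤ) : ℂ), ((l - M : ℤ) : ℂ), ((m : ℤ) : ℂ)) := by
    ext <;> simp [hs] <;> ring
  have hconv : p + s + ((k : ℂ), (l : ℂ), (m : ℂ)) ∈ halfSpace (-1, -1, 0) := by
    obtain ⟨h₁, h₂, h₃⟩ := hps
    refine ⟨?_, ?_, ?_⟩ <;> simp at h₁ h₂ h₃ ⊢ <;> linarith
  have hrel := paramEval_mul_cubeIntegral hg hps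
  rw [cubeIntegral_wallProd_pow_mul, hback, ← hD, cubeIntegral_map_paramEval g _ hconv,
    hshift] at hrel
  exact hrel

lemma hasShiftRelations_one_zero_zero : HasShiftRelations ι 1 0 0 := by
  classical
  refine hasShiftRelations_of_forall_exists_mem (M := 0) (k := 1) (l := 0) (m := 0)
    (D := ∏ i, X i) (fun f p => ?_) fun p₀ hp₀ =>
      ⟨∏ m ∈ Finset.range (Fintype.card ι), (X 0 + 1 + (m : MvPolynomial (Fin 3) ℂ) * X 2),
        ?_, fun f => ?_⟩
  · simpa using cubeIntegral_add_one_fst f p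
  · rw [paramEval_prod_add_natCast_mul, paramEval_X_zero]
    exact prod_fst_add_ne_zero hp₀
  · simpa only [map_prod, map_X, pow_zero, one_mul] using
      isRelationModule_relationModule.exists_prod_X_shift_mem (map C f)

lemma hasShiftRelations_zero_one_zero : HasShiftRelations ι 0 1 0 := by
  classical
  refine hasShiftRelations_of_forall_exists_mem (M := 0) (k := 0) (l := 1) (m := 0)
    (D := ∏ i, (1 - X i)) (fun f p => ?_) fun p₀ hp₀ =>
      ⟨∏ m ∈ Finset.range (Fintype.card ι), (X 1 + 1 + (m : MvPolynomial (Fin 3) ℂ) * X 2),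
        ?_, fun f => ?_⟩
  · simpa using cubeIntegral_add_one_snd f p
  · rw [paramEval_prod_add_natCast_mul, paramEval_X_one]
    exact prod_snd_add_ne_zero hp₀
  · simpa only [map_prod, map_sub, map_one, map_X, pow_zero, one_mul] using
      isRelationModule_relationModule.exists_prod_one_sub_X_shift_mem (map C f)

variable (ι) in
lemma exists_hasShiftRelations_neg_neg_two : ∃ M : ℕ, HasShiftRelations ι (-M) (-M) 2 := by
  classical
  have h2 : IsUnit (2 : MvPolynomial (Fin 3) ℂ) := (isUnit_iff_ne_zero.2 two_ne_zero).map C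
  obtain ⟨M, hM⟩ := isRelationModule_relationModule (ι := ι) |>.exists_diffProd_shift_mem h2 ℂ
  have hrel : HasShiftRelations ι ((0 : ℕ) - M) ((0 : ℕ) - M) (2 : ℕ) := by
    refine hasShiftRelations_of_forall_exists_mem (D := diffProd ι ℂ ^ 2)
      (fun f p => ?_) fun p₀ hp₀ => ?_
    · simpa using cubeIntegral_add_two_thd f p
    · obtain ⟨c, hc, hmem⟩ := hM (paramEval p₀)
        (by simpa only [paramEval_X_two] using isNonsingularParam_of_notMem_setAhat hp₀)
      refine ⟨c, hc, fun f => ?_⟩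
      obtain ⟨g, hg⟩ := hmem (map C f)
      exact ⟨g, by simpa only [wallProd, map_mul, map_pow, map_prod, map_sub, map_one, map_X,
        map_diffProd, mul_comm g] using hg⟩
  exact ⟨M, by simpa using hrel⟩

end ShiftRelations

section Continuation

variable {ι : Type*} [Fintype ι]

variable (ι) in
/-- Every `cubeIntegral f` continues analytically to the part of `halfSpace a` off `setAhat`. -/
def HasContinuation (a : ℝ × ℝ × ℝ) : Prop :=
  ∀ f : MvPolynomial ι ℂ, ∃ F, AnalyticOnNhd ℂ F ((setAhat (Fintype.card ι))ᶜ ∩ halfSpace a) ∧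
    Set.EqOn F (cubeIntegral f)
      ((setAhat (Fintype.card ι))ᶜ ∩ halfSpace a ∩ halfSpace (-1, -1, 0))

lemma hasContinuation_neg_one_neg_one_zero : HasContinuation ι (-1, -1, 0) := fun f =>
  ⟨cubeIntegral f, (analyticOnNhd_cubeIntegral f).mono Set.inter_subset_right, Set.eqOn_refl _ _⟩

lemma HasContinuation.mono {a b : ℝ × ℝ × ℝ} (h : HasContinuation ι a) (hab : a ≤ b) :
    HasContinuation ι b := by
  intro f
  obtain ⟨F, hF, hFf⟩ := h f
  have hsub := Set.inter_subset_inter_right (setAhat (Fintype.card ι))ᶜ (halfSpace_anti hab)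
  exact ⟨F, hF.mono hsub, hFf.mono (Set.inter_subset_inter_left _ hsub)⟩

lemma HasContinuation.sub_of_hasShiftRelations {a : ℝ × ℝ × ℝ} (h : HasContinuation ι a)
    {k l m : ℤ} (hrel : HasShiftRelations ι k l m) :
    HasContinuation ι (a - ((k : ℝ), (l : ℝ), (m : ℝ))) := by
  intro f
  set t : ℂ × ℂ × ℂ := ((k : ℂ), (l : ℂ), (m : ℂ)) with ht
  set a' : ℝ × ℝ × ℝ := a - ((k : ℝ), (l : ℝ), (m : ℝ)) with ha'
  set d : ℝ × ℝ × ℝ := (-1 - (k : ℝ), -1 - (l : ℝ), -(m : ℝ)) with hd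
  have hmem {p : ℂ × ℂ × ℂ} (hp : p ∈ (setAhat (Fintype.card ι))ᶜ ∩ halfSpace a') :
      p + t ∈ (setAhat (Fintype.card ι))ᶜ ∩ halfSpace a := by
    obtain ⟨hpA, h₁, h₂, h₃⟩ := hp
    refine ⟨(add_intCast_mem_setAhat_iff _ _ _).not.2 hpA, ?_, ?_, ?_⟩ <;>
      simp [ha', ht] at h₁ h₂ h₃ ⊢ <;> linarith
  choose F hF hFI using h
  refine exists_analyticOnNhd_of_local_ratio (analyticOnNhd_cubeIntegral f)
    ((isOpen_compl_setAhat _).inter (isOpen_halfSpace a')) Set.inter_subset_left fun p₀ hp₀ => ?_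
  obtain ⟨b, c, s, e, hc, hc₀, he, heq⟩ := hrel f p₀ hp₀.1
  refine ⟨a', b ⊔ (a' ⊔ d), c, fun p => ∑ ν ∈ s, e ν p * F (monomial ν 1) (p + t), hp₀.2, hc, hc₀,
    fun p hp => ?_, fun p hp => ?_⟩
  · exact Finset.analyticAt_fun_sum _ fun ν _ => (he ν p trivial).mul <|
      (hF (monomial ν 1) (p + t) (hmem hp)).comp (f := fun p => p + t) (by fun_prop)
  · obtain ⟨hpA, hpb⟩ := hp
    rw [halfSpace_sup, halfSpace_sup] at hpb
    have hconv : p + t ∈ halfSpace (-1, -1, 0) := by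
      obtain ⟨-, -, h₁, h₂, h₃⟩ := hpb
      refine ⟨?_, ?_, ?_⟩ <;> simp [hd, ht] at h₁ h₂ h₃ ⊢ <;> linarith
    refine (heq hpb.1).trans (Finset.sum_congr rfl fun ν _ => ?_)
    rw [hFI (monomial ν 1) ⟨hmem ⟨hpA, hpb.2.1⟩, hconv⟩]

lemma HasContinuation.sub_nsmul_of_hasShiftRelations {a : ℝ × ℝ × ℝ} (h : HasContinuation ι a)
    {k l m : ℤ} (hrel : HasShiftRelations ι k l m) (j : ℕ) :
    HasContinuation ι (a - j • ((k : ℝ), (l : ℝ), (m : ℝ))) := by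
  induction j with
  | zero => simpa only [zero_nsmul, sub_zero] using h
  | succ j ih => simpa only [succ_nsmul, sub_sub] using ih.sub_of_hasShiftRelations hrel

theorem hasContinuation (a : ℝ × ℝ × ℝ) : HasContinuation ι a := by
  obtain ⟨M, hγ⟩ := exists_hasShiftRelations_neg_neg_two ι
  obtain ⟨j, hj⟩ := exists_nat_ge (-a.2.2)
  obtain ⟨k, hk⟩ := exists_nat_ge (-1 + j * M - a.1)
  obtain ⟨l, hl⟩ := exists_nat_ge (-1 + j * M - a.2.1)
  refine (((hasContinuation_neg_one_neg_one_zero.sub_nsmul_of_hasShiftRelations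
    hγ j).sub_nsmul_of_hasShiftRelations hasShiftRelations_one_zero_zero
      k).sub_nsmul_of_hasShiftRelations hasShiftRelations_zero_one_zero l).mono ?_
  refine ⟨?_, ?_, ?_⟩ <;> simp <;> linarith

theorem exists_analyticOnNhd_eqOn_cubeIntegral (f : MvPolynomial ι ℂ) :
    ∃ F, AnalyticOnNhd ℂ F (setAhat (Fintype.card ι))ᶜ ∧
      Set.EqOn F (cubeIntegral f) ((setAhat (Fintype.card ι))ᶜ ∩ halfSpace (-1, -1, 0)) := by
  refine exists_analyticOnNhd_of_local_ratio (analyticOnNhd_cubeIntegral f)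
    (isOpen_compl_setAhat _) subset_rfl fun p₀ _ => ?_
  set a : ℝ × ℝ × ℝ := (p₀.1.re - 1, p₀.2.1.re - 1, p₀.2.2.re - 1)
  obtain ⟨F, hF, hFf⟩ := hasContinuation a f
  refine ⟨a, a ⊔ (-1, -1, 0), fun _ => 1, F, ⟨sub_one_lt _, sub_one_lt _, sub_one_lt _⟩,
    analyticOnNhd_const, one_ne_zero, hF, fun p hp => ?_⟩
  rw [halfSpace_sup, ← Set.inter_assoc] at hp
  exact (one_mul _).trans (hFf hp).symm

end Continuation

section Symmetrization

variable {n : ℕ} {y : Fin n → ℝ}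

lemma strictAnti_of_mem_orderedSimplex (hy : y ∈ orderedSimplex n) : StrictAnti y :=
  fun i j hij => hy.2 i j hij

lemma mem_genericCube_of_mem_orderedSimplex (hy : y ∈ orderedSimplex n) :
    y ∈ genericCube (Fin n) :=
  ⟨hy.1, (strictAnti_of_mem_orderedSimplex hy).injective⟩

lemma measurableSet_orderedSimplex : MeasurableSet (orderedSimplex n) := by
  have h : orderedSimplex n =
      (⋂ i, {y | y i ∈ Set.Ioo 0 1}) ∩ ⋂ i, ⋂ j, {y | i < j → y j < y i} := by
    ext y
    simp [orderedSimplex]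
  rw [h]
  refine .inter (.iInter fun i => measurable_pi_apply i measurableSet_Ioo)
    (.iInter fun i => .iInter fun j => .imp (.const _) ?_)
  exact measurableSet_lt (measurable_pi_apply j) (measurable_pi_apply i)

lemma comp_perm_mem_genericCube_iff {ι : Type*} (σ : Equiv.Perm ι) {y : ι → ℝ} :
    y ∘ σ ∈ genericCube ι ↔ y ∈ genericCube ι :=
  and_congr (σ.forall_congr_left.trans (by simp)) (σ.injective_comp y)

lemma existsUnique_perm_comp_mem_orderedSimplex (hy : y ∈ genericCube (Fin n)) :
    ∃! σ : Equiv.Perm (Fin n), y ∘ σ ∈ orderedSimplex n := by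
  have hanti : Antitone (y ∘ Tuple.sort (OrderDual.toDual ∘ y)) := fun i j hij =>
    Tuple.monotone_sort (OrderDual.toDual ∘ y) hij
  have hstrict := hanti.strictAnti_of_injective (hy.2.comp (Equiv.injective _))
  refine ⟨_, ⟨fun i => hy.1 _, fun i j hij => hstrict hij⟩, fun τ hτ => Equiv.ext fun i => hy.2 ?_⟩
  exact congrFun (Tuple.unique_antitone (strictAnti_of_mem_orderedSimplex hτ).antitone hanti) i

lemma sum_indicator_orderedSimplex_comp_perm {H : (Fin n → ℝ) → ℂ}
    (hzero : ∀ y ∉ genericCube (Fin n), H y = 0)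
    (hsymm : ∀ (σ : Equiv.Perm (Fin n)) y, H (y ∘ σ) = H y) (y : Fin n → ℝ) :
    ∑ σ : Equiv.Perm (Fin n), (orderedSimplex n).indicator H (y ∘ σ) = H y := by
  by_cases hy : y ∈ genericCube (Fin n)
  · obtain ⟨σ, hσ, huniq⟩ := existsUnique_perm_comp_mem_orderedSimplex hy
    rw [Fintype.sum_eq_single σ fun τ hτ =>
      Set.indicator_of_notMem (fun h => hτ (huniq τ h)) _, Set.indicator_of_mem hσ, hsymm]
  · rw [hzero y hy]
    refine Finset.sum_eq_zero fun σ _ => Set.indicator_of_notMem (fun h => hy ?_) _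
    exact (comp_perm_mem_genericCube_iff σ).1 (mem_genericCube_of_mem_orderedSimplex h)

theorem integral_eq_factorial_mul_setIntegral_orderedSimplex {H : (Fin n → ℝ) → ℂ}
    (hH : Integrable H) (hzero : ∀ y ∉ genericCube (Fin n), H y = 0)
    (hsymm : ∀ (σ : Equiv.Perm (Fin n)) y, H (y ∘ σ) = H y) :
    ∫ y, H y = n.factorial * ∫ y in orderedSimplex n, H y := by
  have hInt (σ : Equiv.Perm (Fin n)) :
      Integrable fun y => (orderedSimplex n).indicator H (y ∘ σ) :=
    (measurePreserving_comp_perm σ).integrable_comp_of_integrable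
      (hH.indicator measurableSet_orderedSimplex)
  calc ∫ y, H y
      = ∫ y, ∑ σ : Equiv.Perm (Fin n), (orderedSimplex n).indicator H (y ∘ σ) := by
        simp only [sum_indicator_orderedSimplex_comp_perm hzero hsymm]
    _ = ∑ σ : Equiv.Perm (Fin n), ∫ y, (orderedSimplex n).indicator H (y ∘ σ) :=
        integral_finsetSum _ fun σ _ => hInt σ
    _ = n.factorial * ∫ y in orderedSimplex n, H y := by
        simp only [integral_comp_perm, integral_indicator measurableSet_orderedSimplex,
          Finset.sum_const, Finset.card_univ, Fintype.card_perm, Fintype.card_fin, nsmul_eq_mul]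

end Symmetrization

section ClearedNumerator

variable {n d : ℕ} {c : (Fin n → ℤ) →₀ ℂ} {y : Fin n → ℝ}

/-- The polynomial `(y₁ ⋯ yₙ) ^ d · f` for the Laurent polynomial `f` with coefficients `c`. The
exponents are truncated at zero, so that this is meaningful only if all exponents of `f` are at
least `-d`. -/
def clearedNumerator (d : ℕ) (c : (Fin n → ℤ) →₀ ℂ) : MvPolynomial (Fin n) ℂ :=
  c.sum fun k a => monomial (Finsupp.equivFunOnFinite.symm fun i => (k i + d).toNat) a

lemma evalReal_clearedNumerator (hd : ∀ k ∈ c.support, ∀ i, -(d : ℤ) ≤ k i)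
    (hy : ∀ i, y i ≠ 0) :
    evalReal y (clearedNumerator d c) = (∏ i, (y i : ℂ) ^ d) * laurentEval c y := by
  rw [evalReal, clearedNumerator, laurentEval, Finsupp.sum, Finsupp.sum, map_sum, Finset.mul_sum]
  refine Finset.sum_congr rfl fun k hk => ?_
  rw [eval_monomial, Finsupp.prod_fintype _ _ fun _ => pow_zero _, mul_left_comm,
    ← Finset.prod_mul_distrib]
  refine congrArg _ (Finset.prod_congr rfl fun i _ => ?_)
  have hexp : (((k i + d).toNat : ℕ) : ℤ) = d + k i := by have := hd k hk i; lia
  rw [← zpow_natCast, ← zpow_natCast, ← zpow_add₀ (ofReal_ne_zero.2 (hy i)), ← hexp,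
    Finsupp.equivFunOnFinite_symm_apply_apply]

lemma evalReal_clearedNumerator_comp_perm (hd : ∀ k ∈ c.support, ∀ i, -(d : ℤ) ≤ k i)
    (hsym : ∀ (σ : Equiv.Perm (Fin n)) (y : Fin n → ℝ), laurentEval c (y ∘ σ) = laurentEval c y)
    (hy : ∀ i, y i ≠ 0) (σ : Equiv.Perm (Fin n)) :
    evalReal (y ∘ σ) (clearedNumerator d c) = evalReal y (clearedNumerator d c) := by
  rw [evalReal_clearedNumerator (y := y ∘ σ) hd fun i => hy (σ i),
    evalReal_clearedNumerator hd hy, hsym]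
  exact congrArg (· * _) (Equiv.prod_comp σ fun i => (y i : ℂ) ^ d)

end ClearedNumerator

section SelbergIntegral

lemma prod_offDiag_eq_prod_prod_Ioi {ι M : Type*} [Fintype ι] [LinearOrder ι]
    [LocallyFiniteOrderTop ι] [LocallyFiniteOrderBot ι] [CommMonoid M] (f : ι → ι → M) :
    ∏ q ∈ (Finset.univ : Finset ι).offDiag, f q.1 q.2 =
      ∏ i, ∏ j ∈ Finset.Ioi i, f i j * f j i := by
  rw [Finset.prod_prod_Ioi_mul_eq_prod_prod_off_diag fun j i => f i j]
  exact Finset.prod_finset_product _ _ _ fun q => by simp [eq_comm]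

variable {n d : ℕ} {c : (Fin n → ℤ) →₀ ℂ}

lemma weight_of_mem_orderedSimplex (p : ℂ × ℂ × ℂ) {y : Fin n → ℝ} (hy : y ∈ orderedSimplex n) :
    weight p y = (∏ i, ((y i : ℂ) ^ p.1 * ((1 - y i : ℝ) : ℂ) ^ p.2.1)) *
      ∏ i, ∏ j, if i < j then ((y i - y j : ℝ) : ℂ) ^ (2 * p.2.2) else 1 := by
  rw [weight, prod_offDiag_eq_prod_prod_Ioi fun i j => posPow p.2.2 |y i - y j|]
  congr 1
  · refine Finset.prod_congr rfl fun i _ => ?_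
    rw [posPow_of_pos _ (hy.1 i).1, posPow_of_pos _ (sub_pos.2 (hy.1 i).2)]
  · refine Finset.prod_congr rfl fun i _ => ?_
    rw [← Finset.prod_filter, Finset.filter_lt_eq_Ioi]
    refine Finset.prod_congr rfl fun j hj => ?_
    have hpos : 0 < y i - y j := sub_pos.2 (hy.2 i j (Finset.mem_Ioi.1 hj))
    rw [abs_sub_comm (y j), abs_of_pos hpos, posPow_of_pos _ hpos, two_mul,
      cpow_add _ _ (ofReal_ne_zero.2 hpos.ne')]

lemma selbergIntegrand_laurentEval (hd : ∀ k ∈ c.support, ∀ i, -(d : ℤ) ≤ k i)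
    (p : ℂ × ℂ × ℂ) {y : Fin n → ℝ} (hy : y ∈ orderedSimplex n) :
    selbergIntegrand n (laurentEval c) (p.1 + d) p.2.1 p.2.2 y =
      evalReal y (clearedNumerator d c) * weight p y := by
  have hy0 (i : Fin n) : y i ≠ 0 := (hy.1 i).1.ne'
  have hpow (i : Fin n) : (y i : ℂ) ^ (p.1 + d) = (y i : ℂ) ^ d * (y i : ℂ) ^ p.1 := by
    rw [cpow_add _ _ (ofReal_ne_zero.2 (hy0 i)), cpow_natCast, mul_comm]
  rw [selbergIntegrand, weight_of_mem_orderedSimplex p hy, evalReal_clearedNumerator hd hy0]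
  simp only [hpow, Finset.prod_mul_distrib]
  ring

theorem cubeIntegral_clearedNumerator (hd : ∀ k ∈ c.support, ∀ i, -(d : ℤ) ≤ k i)
    (hsym : ∀ (σ : Equiv.Perm (Fin n)) (y : Fin n → ℝ), laurentEval c (y ∘ σ) = laurentEval c y)
    {p : ℂ × ℂ × ℂ} (hp : p ∈ halfSpace (-1, -1, 0)) :
    cubeIntegral (clearedNumerator d c) p =
      n.factorial * selbergS n (laurentEval c) (p.1 + d) p.2.1 p.2.2 := by
  rw [cubeIntegral, selbergS, integral_eq_factorial_mul_setIntegral_orderedSimplex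
    (integrable_evalReal_mul_weight _ hp)
    (fun y hy => by rw [weight_eq_zero_of_notMem p hy, mul_zero]) fun σ y => ?_]
  · exact congrArg _ (setIntegral_congr_fun measurableSet_orderedSimplex fun y hy =>
      (selbergIntegrand_laurentEval hd p hy).symm)
  · rw [weight_comp_perm]
    by_cases hy : y ∈ genericCube (Fin n)
    · rw [evalReal_clearedNumerator_comp_perm hd hsym fun i => (hy.1 i).1.ne']
    · rw [weight_eq_zero_of_notMem p hy, mul_zero, mul_zero]

theorem exists_analyticOnNhd_eqOn_selbergS (hd : ∀ k ∈ c.support, ∀ i, -(d : ℤ) ≤ k i)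
    (hsym : ∀ (σ : Equiv.Perm (Fin n)) (y : Fin n → ℝ),
      laurentEval c (y ∘ σ) = laurentEval c y) :
    ∃ F, AnalyticOnNhd ℂ F (setAhat n)ᶜ ∧
      Set.EqOn F (fun p => selbergS n (laurentEval c) p.1 p.2.1 p.2.2)
        ((setAhat n)ᶜ ∩ halfSpace ((d : ℝ) - 1, -1, 0)) := by
  obtain ⟨F, hF, hFI⟩ := exists_analyticOnNhd_eqOn_cubeIntegral (clearedNumerator d c)
  rw [Fintype.card_fin] at hF hFI
  set s : ℂ × ℂ × ℂ := (((-d : ℤ) : ℂ), ((0 : ℤ) : ℂ), ((0 : ℤ) : ℂ)) with hs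
  have hshift {p : ℂ × ℂ × ℂ} (hp : p ∈ (setAhat n)ᶜ) : p + s ∈ (setAhat n)ᶜ :=
    (add_intCast_mem_setAhat_iff _ _ _).not.2 hp
  refine ⟨fun p => (n.factorial : ℂ)⁻¹ * F (p + s), fun p hp => analyticAt_const.mul <|
    (hF (p + s) (hshift hp)).comp (f := fun p => p + s) (by fun_prop), ?_⟩
  rintro p ⟨hpA, hα, hβ, hγ⟩
  have hconv : p + s ∈ halfSpace (-1, -1, 0) := by
    refine ⟨?_, ?_, ?_⟩ <;> simp [hs] at hα hβ hγ ⊢ <;> linarith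
  beta_reduce
  rw [hFI ⟨hshift hpA, hconv⟩, cubeIntegral_clearedNumerator hd hsym hconv,
    inv_mul_cancel_left₀ (Nat.cast_ne_zero.2 n.factorial_ne_zero)]
  simp [hs]

end SelbergIntegral

end Selberg

/-- Sussman's theorem: for a *symmetric* Laurent polynomial `f`, the Selberg integral
`S_n[f]` admits a unique analytic continuation to `ℂ³ ∖ Â_n`. -/
theorem selberg_unique_analytic_continuation_Ahat (n d : ℕ) (hn : 1 ≤ n)
    (c : (Fin n → ℤ) →₀ ℂ) (hd : ∀ k ∈ c.support, ∀ i, -(d : ℤ) ≤ k i)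
    (hsym : ∀ (σ : Equiv.Perm (Fin n)) (y : Fin n → ℝ),
      laurentEval c (y ∘ σ) = laurentEval c y) :
    ∃ F : ℂ × ℂ × ℂ → ℂ,
      (AnalyticOnNhd ℂ F (setAhat n)ᶜ ∧
        ∀ p : ℂ × ℂ × ℂ, p ∉ setAhat n →
          (d : ℝ) - 1 < p.1.re → -1 < p.2.1.re → 0 < p.2.2.re →
          F p = selbergS n (laurentEval c) p.1 p.2.1 p.2.2) ∧
      ∀ G : ℂ × ℂ × ℂ → ℂ,
        (AnalyticOnNhd ℂ G (setAhat n)ᶜ ∧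
          ∀ p : ℂ × ℂ × ℂ, p ∉ setAhat n →
            (d : ℝ) - 1 < p.1.re → -1 < p.2.1.re → 0 < p.2.2.re →
            G p = selbergS n (laurentEval c) p.1 p.2.1 p.2.2) →
        Set.EqOn G F (setAhat n)ᶜ := by
  obtain ⟨F, hF, hFS⟩ := Selberg.exists_analyticOnNhd_eqOn_selbergS hd hsym
  refine ⟨F, ⟨hF, fun p hp hα hβ hγ => hFS ⟨hp, hα, hβ, hγ⟩⟩, fun G ⟨hG, hGS⟩ => ?_⟩
  refine Selberg.eqOn_compl_setAhat_of_eqOn_halfSpace (b := (d - 1, -1, 0)) hG hF fun p hp => ?_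
  exact (hGS p hp.1 hp.2.1 hp.2.2.1 hp.2.2.2).trans (hFS hp).symm

end
end

section
/- Let α, β ∈ ℂ with Re α > −1, Re β > −1, α ∉ ℤ and β ∉ ℤ, and let r ∈ ℝ with 0 < r < 1/2. Define J(r) = ∫_r^{1−r} u^α (1−u)^β du (real positive bases), I₀(r) = ∫_0^1 exp(α(log r + 2πi t)) · (1 − r e^{2πi t})^β · 2πi r e^{2πi t} dt, and I₁(r) = −∫_0^1 (1 − r e^{2πi t})^α · exp(β(log r + 2πi t)) · 2πi r e^{2πi t} dt, where (1 − r e^{2πi t})^w denotes the principal power (the base has positive real part since r < 1/2). Then J(r) − (1 − e^{2πiα})^{−1} · I₀(r) + (1 − e^{2πiβ})^{−1} · I₁(r) = Γ(α+1)Γ(β+1)/Γ(α+β+2); in particular the left-hand side does not depend on r. -/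
open Complex intervalIntegral

noncomputable section

/-!
Near `0` the integrand is `z ^ a * f z` with `f` holomorphic. In the coordinate `w = log z` the
annulus `ε ≤ |z| ≤ r`, cut along the positive real axis, becomes a rectangle of height `2π` on which
`z ^ a * f z dz` is holomorphic and is multiplied by `exp (2πia)` from the bottom side to the top
side. Cauchy's theorem on this rectangle, followed by `ε → 0` (where `Re a > -1` kills the small
circle), shows that the circle integral of radius `r` is `(exp (2πia) - 1) * ∫₀ʳ u ^ a * f u du`.
Hence the two circle terms of the regularized chain contribute exactly the end pieces `[0, r]` and
`[1 - r, 1]` of the Euler beta integral.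
-/

open Set Filter Topology MeasureTheory Metric
open scoped Interval

/-- The integral of `z ^ a * f z` over the circle of radius `r` around `0`, traversed once
counterclockwise from `r`, with `z ^ a` continued along the circle from its principal value at `r`.
Since the continued branch is not a function of `z`, it enters through the parametrization
`z = exp (log r + 2πit)`. -/
def loopIntegral (a : ℂ) (f : ℂ → ℂ) (r : ℝ) : ℂ :=
  ∫ t in (0 : ℝ)..1,
    exp (a * ((Real.log r : ℂ) + 2 * (Real.pi : ℂ) * I * (t : ℂ))) *
      f ((r : ℂ) * exp (2 * (Real.pi : ℂ) * I * (t : ℂ))) *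
      (2 * (Real.pi : ℂ) * I * (r : ℂ) * exp (2 * (Real.pi : ℂ) * I * (t : ℂ)))

/-- The pullback of the form `z ^ a * f z dz` under `z = exp w`, as a coefficient of `dw`. The
factor `dz = exp w dw` is absorbed into the exponent `a + 1`. -/
def logPullback (a : ℂ) (f : ℂ → ℂ) (w : ℂ) : ℂ :=
  exp ((a + 1) * w) * f (exp w)

section LoopIntegral

variable {a : ℂ} {f : ℂ → ℂ} {r ε : ℝ}

lemma exp_ofReal_log (hr : 0 < r) : exp (Real.log r : ℂ) = r := by
  rw [← ofReal_exp, Real.exp_log hr]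

lemma logPullback_add_two_pi_I (a : ℂ) (f : ℂ → ℂ) (w : ℂ) :
    logPullback a f (w + 2 * Real.pi * I) = exp (2 * Real.pi * I * a) * logPullback a f w := by
  have hexponent : (a + 1) * (w + 2 * Real.pi * I) =
      2 * Real.pi * I * a + (a + 1) * w + 2 * Real.pi * I := by ring
  rw [logPullback, logPullback, hexponent, exp_periodic, exp_periodic, exp_add, mul_assoc]

lemma mapsTo_exp_reProdIm_annulus (hε : 0 < ε) (hr : 0 < r) (s : Set ℝ) :
    MapsTo exp (Icc (Real.log ε) (Real.log r) ×ℂ s) (closedBall 0 r \ ball 0 ε) := by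
  intro w hw
  simpa [norm_exp] using And.intro ((Real.le_log_iff_exp_le hr).1 hw.1.2)
    ((Real.log_le_iff_le_exp hε).1 hw.1.1)

lemma differentiableOn_logPullback {s t : Set ℂ} (hf : DifferentiableOn ℂ f t)
    (hst : MapsTo exp s t) : DifferentiableOn ℂ (logPullback a f) s :=
  DifferentiableOn.mul (by fun_prop) (hf.comp differentiable_exp.differentiableOn hst)

lemma loopIntegral_eq_integral_logPullback (hr : 0 < r) :
    loopIntegral a f r =
      I * ∫ y in (0 : ℝ)..2 * Real.pi, logPullback a f (Real.log r + y * I) := by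
  have hscale := smul_integral_comp_mul_left (a := 0) (b := 1)
    (fun y : ℝ ↦ logPullback a f (Real.log r + y * I)) (2 * Real.pi)
  rw [mul_zero, mul_one] at hscale
  rw [← hscale, real_smul, ← mul_assoc, ← intervalIntegral.integral_const_mul, loopIntegral]
  congr 1 with t
  have hangle : ((2 * Real.pi * t : ℝ) : ℂ) * I = 2 * Real.pi * I * t := by push_cast; ring
  rw [logPullback, hangle, add_mul a, one_mul, exp_add, exp_add (Real.log r : ℂ), exp_ofReal_log hr]
  push_cast
  ring

lemma integral_logPullback_ofReal (hε : 0 < ε) (hεr : ε ≤ r)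
    (hf : ContinuousOn (fun u : ℝ ↦ f u) (Icc ε r)) :
    ∫ x in Real.log ε..Real.log r, logPullback a f x =
      ∫ u in ε..r, (u : ℂ) ^ a * f u := by
  have hr : 0 < r := hε.trans_le hεr
  have himage : Real.exp '' [[Real.log ε, Real.log r]] ⊆ Icc ε r := by
    rw [uIcc_of_le (Real.log_le_log hε hεr)]
    rintro _ ⟨x, hx, rfl⟩
    exact ⟨(Real.log_le_iff_le_exp hε).1 hx.1, (Real.le_log_iff_exp_le hr).1 hx.2⟩
  have hcont : ContinuousOn (fun u : ℝ ↦ (u : ℂ) ^ a * f u) (Icc ε r) :=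
    ContinuousOn.mul (fun u hu ↦ (continuousAt_ofReal_cpow_const u a
      (Or.inr (hε.trans_le hu.1).ne')).continuousWithinAt) hf
  have hsubst := integral_deriv_smul_comp' (fun x _ ↦ Real.hasDerivAt_exp x)
    Real.continuous_exp.continuousOn (hcont.mono himage)
  rw [Real.exp_log hε, Real.exp_log hr] at hsubst
  rw [← hsubst]
  congr 1 with x
  have hpow : ((Real.exp x : ℝ) : ℂ) ^ a = exp (a * x) := by
    rw [cpow_def_of_ne_zero (ofReal_ne_zero.2 (Real.exp_pos x).ne'),
      ← ofReal_log (Real.exp_pos x).le, Real.log_exp, mul_comm]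
  rw [Function.comp_apply, hpow, logPullback, real_smul, ofReal_exp, add_mul, one_mul, exp_add]
  ring

lemma loopIntegral_sub_loopIntegral (hε : 0 < ε) (hεr : ε ≤ r)
    (hf : DifferentiableOn ℂ f (closedBall 0 r \ ball 0 ε)) :
    loopIntegral a f r - loopIntegral a f ε =
      (exp (2 * Real.pi * I * a) - 1) * ∫ u in ε..r, (u : ℂ) ^ a * f u := by
  have hr : 0 < r := hε.trans_le hεr
  have hcont : ContinuousOn (fun u : ℝ ↦ f u) (Icc ε r) :=
    hf.continuousOn.comp continuous_ofReal.continuousOn fun u hu ↦ by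
      simpa [abs_of_pos (hε.trans_le hu.1)] using hu.symm
  have hholo : DifferentiableOn ℂ (logPullback a f)
      ([[(Real.log ε : ℂ).re, (Real.log r + (2 * Real.pi : ℝ) * I : ℂ).re]] ×ℂ
        [[(Real.log ε : ℂ).im, (Real.log r + (2 * Real.pi : ℝ) * I : ℂ).im]]) := by
    refine differentiableOn_logPullback hf ?_
    simpa [uIcc_of_le (Real.log_le_log hε hεr)] using mapsTo_exp_reProdIm_annulus hε hr _
  have hcauchy := integral_boundary_rect_eq_zero_of_differentiableOn _ _ _ hholo
  have hmonodromy (x : ℝ) : logPullback a f (x + (2 * Real.pi : ℝ) * I) =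
      exp (2 * Real.pi * I * a) * logPullback a f x := by
    rw [ofReal_mul, ofReal_ofNat, logPullback_add_two_pi_I]
  rw [loopIntegral_eq_integral_logPullback hr, loopIntegral_eq_integral_logPullback hε,
    ← integral_logPullback_ofReal hε hεr hcont]
  simp only [add_re, add_im, ofReal_re, ofReal_im, re_ofReal_mul, im_ofReal_mul, I_re, I_im,
    mul_zero, mul_one, add_zero, zero_add, ofReal_zero, zero_mul, hmonodromy,
    intervalIntegral.integral_const_mul, smul_eq_mul] at hcauchy
  linear_combination hcauchy

lemma norm_loopIntegral_le {M : ℝ} (hr : 0 < r) (hM : ∀ z : ℂ, ‖z‖ = r → ‖f z‖ ≤ M) :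
    ‖loopIntegral a f r‖ ≤
      r ^ (a.re + 1) * Real.exp (2 * Real.pi * |a.im|) * M * (2 * Real.pi) := by
  have hbound : ∀ y ∈ Ι (0 : ℝ) (2 * Real.pi),
      ‖logPullback a f (Real.log r + y * I)‖ ≤
        r ^ (a.re + 1) * Real.exp (2 * Real.pi * |a.im|) * M := by
    intro y hy
    rw [uIoc_of_le Real.two_pi_pos.le] at hy
    have hrot : -(a.im * y) ≤ 2 * Real.pi * |a.im| :=
      calc -(a.im * y) ≤ |a.im| * y := by nlinarith [neg_abs_le a.im, hy.1]
        _ ≤ 2 * Real.pi * |a.im| := by nlinarith [abs_nonneg a.im, hy.2]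
    have hpow : ‖exp ((a + 1) * (Real.log r + y * I))‖ ≤
        r ^ (a.re + 1) * Real.exp (2 * Real.pi * |a.im|) := by
      have hre : ((a + 1) * (Real.log r + y * I)).re = Real.log r * (a.re + 1) - a.im * y := by
        simp [mul_comm]
      rw [norm_exp, hre, Real.rpow_def_of_pos hr, ← Real.exp_add, Real.exp_le_exp]
      linarith
    rw [logPullback, norm_mul]
    gcongr
    exact hM _ (by simp [norm_exp, Real.exp_log hr])
  rw [loopIntegral_eq_integral_logPullback hr, norm_mul, norm_I, one_mul]
  simpa [abs_of_pos Real.pi_pos] using norm_integral_le_of_norm_le_const hbound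

lemma tendsto_loopIntegral_nhdsGT_zero (ha : -1 < a.re) (hf : ContinuousAt f 0) :
    Tendsto (loopIntegral a f) (𝓝[>] 0) (𝓝 0) := by
  obtain ⟨δ, hδ, hfδ⟩ := Metric.continuousAt_iff.1 hf 1 one_pos
  have hM : ∀ z : ℂ, ‖z‖ < δ → ‖f z‖ ≤ ‖f 0‖ + 1 := fun z hz ↦ by
    have hdist : ‖f z - f 0‖ < 1 := by simpa [dist_eq_norm] using hfδ (x := z) (by simpa using hz)
    linarith [norm_le_norm_add_norm_sub' (f z) (f 0)]
  have hpow : Tendsto (fun ε : ℝ ↦ ε ^ (a.re + 1)) (𝓝[>] 0) (𝓝 0) := by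
    have hpos : 0 < a.re + 1 := by linarith
    simpa [Real.zero_rpow hpos.ne'] using
      (Real.continuousAt_rpow_const 0 _ (Or.inr hpos.le)).tendsto.mono_left nhdsWithin_le_nhds
  refine squeeze_zero_norm' (a := fun ε ↦ ε ^ (a.re + 1) * Real.exp (2 * Real.pi * |a.im|) *
    (‖f 0‖ + 1) * (2 * Real.pi)) ?_ ?_
  · filter_upwards [Ioo_mem_nhdsGT hδ] with ε hε
    exact norm_loopIntegral_le hε.1 fun z hz ↦ hM z (hz.trans_lt hε.2)
  · simpa using ((hpow.mul_const _).mul_const _).mul_const _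

lemma loopIntegral_eq_mul_integral (ha : -1 < a.re) (hr : 0 < r)
    (hf : DifferentiableOn ℂ f (closedBall 0 r)) :
    loopIntegral a f r =
      (exp (2 * Real.pi * I * a) - 1) * ∫ u in (0 : ℝ)..r, (u : ℂ) ^ a * f u := by
  have hcont : ContinuousOn (fun u : ℝ ↦ f u) [[0, r]] :=
    hf.continuousOn.comp continuous_ofReal.continuousOn fun u hu ↦ by
      rw [uIcc_of_le hr.le] at hu
      simpa [abs_of_nonneg hu.1] using hu.2
  have hint : IntervalIntegrable (fun u : ℝ ↦ (u : ℂ) ^ a * f u) volume 0 r :=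
    (intervalIntegrable_cpow' ha).mul_continuousOn hcont
  have hf0 : ContinuousAt f 0 :=
    hf.continuousOn.continuousAt (closedBall_mem_nhds 0 hr)
  have hsegment : Tendsto (fun ε : ℝ ↦ ∫ u in ε..r, (u : ℂ) ^ a * f u) (𝓝[>] 0)
      (𝓝 (∫ u in (0 : ℝ)..r, (u : ℂ) ^ a * f u)) :=
    (continuousOn_primitive_interval_left ((intervalIntegrable_iff' enorm_ne_top).1 hint) 0
      left_mem_uIcc).tendsto.mono_left
        (nhdsWithin_le_of_mem (by rw [uIcc_of_le hr.le]; exact Icc_mem_nhdsGT hr))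
  have hannulus : ∀ᶠ ε in 𝓝[>] (0 : ℝ), loopIntegral a f r - loopIntegral a f ε =
      (exp (2 * Real.pi * I * a) - 1) * ∫ u in ε..r, (u : ℂ) ^ a * f u := by
    filter_upwards [Ioo_mem_nhdsGT hr] with ε hε
    exact loopIntegral_sub_loopIntegral hε.1 hε.2.le (hf.mono sdiff_subset)
  have hlimit := (tendsto_const_nhds.sub (tendsto_loopIntegral_nhdsGT_zero ha hf0)).congr' hannulus
  rw [sub_zero] at hlimit
  exact tendsto_nhds_unique hlimit (hsegment.const_mul _)

end LoopIntegral

lemma differentiableOn_one_sub_cpow (b : ℂ) :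
    DifferentiableOn ℂ (fun z : ℂ ↦ (1 - z) ^ b) (ball 0 1) := by
  refine DifferentiableOn.cpow_const (by fun_prop) fun z hz ↦ ?_
  simpa [sub_eq_add_neg] using mem_slitPlane_of_norm_lt_one (z := -z) (by simpa using hz)

lemma one_sub_exp_two_pi_I_mul_ne_zero {a : ℂ} (ha : ∀ m : ℤ, a ≠ m) :
    1 - exp (2 * Real.pi * I * a) ≠ 0 := by
  intro hzero
  obtain ⟨n, hn⟩ := exp_eq_one_iff.1 (sub_eq_zero.1 hzero).symm
  exact ha n (mul_right_cancel₀ two_pi_I_ne_zero ((mul_comm _ _).trans hn))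

lemma inv_mul_loopIntegral_one_sub_cpow {a : ℂ} (ha : -1 < a.re) (haZ : ∀ m : ℤ, a ≠ m) (b : ℂ)
    {r : ℝ} (hr0 : 0 < r) (hr1 : r < 1) :
    (1 - exp (2 * Real.pi * I * a))⁻¹ * loopIntegral a (fun z ↦ (1 - z) ^ b) r =
      -∫ u in (0 : ℝ)..r, (u : ℂ) ^ a * (1 - u : ℂ) ^ b := by
  rw [loopIntegral_eq_mul_integral ha hr0
      ((differentiableOn_one_sub_cpow b).mono (closedBall_subset_ball hr1)),
    inv_mul_eq_iff_eq_mul₀ (one_sub_exp_two_pi_I_mul_ne_zero haZ)]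
  ring

lemma integral_cpow_mul_one_sub_cpow_reflect (a b : ℂ) (r : ℝ) :
    ∫ u in (0 : ℝ)..r, (u : ℂ) ^ b * (1 - u : ℂ) ^ a =
      ∫ u in (1 - r)..1, (u : ℂ) ^ a * (1 - u : ℂ) ^ b := by
  simpa [mul_comm] using integral_comp_sub_left (a := 0) (b := r)
    (fun u : ℝ ↦ (u : ℂ) ^ a * (1 - u : ℂ) ^ b) 1

section Beta

variable {a b : ℂ}

lemma add_one_re_pos (ha : -1 < a.re) : 0 < (a + 1).re := by
  rw [add_re, one_re]
  linarith

lemma intervalIntegrable_cpow_mul_one_sub_cpow (ha : -1 < a.re) (hb : -1 < b.re) {x y : ℝ}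
    (hx : x ∈ Icc (0 : ℝ) 1) (hy : y ∈ Icc (0 : ℝ) 1) :
    IntervalIntegrable (fun u : ℝ ↦ (u : ℂ) ^ a * (1 - u : ℂ) ^ b) volume x y := by
  have hbeta := betaIntegral_convergent (add_one_re_pos ha) (add_one_re_pos hb)
  simp only [add_sub_cancel_right] at hbeta
  rw [← uIcc_of_le zero_le_one] at hx hy
  exact hbeta.mono_set (uIcc_subset_uIcc hx hy)

lemma integral_cpow_mul_one_sub_cpow_eq_Gamma (ha : -1 < a.re) (hb : -1 < b.re) :
    ∫ u in (0 : ℝ)..1, (u : ℂ) ^ a * (1 - u : ℂ) ^ b =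
      Gamma (a + 1) * Gamma (b + 1) / Gamma (a + b + 2) := by
  have hsum : a + b + 2 = (a + 1) + (b + 1) := by ring
  rw [hsum, ← betaIntegral_eq_Gamma_mul_div _ _ (add_one_re_pos ha) (add_one_re_pos hb),
    betaIntegral]
  simp only [add_sub_cancel_right]

end Beta

theorem regularized_beta_integral_general (α β : ℂ) (hα : -1 < α.re) (hβ : -1 < β.re)
    (hαZ : ∀ m : ℤ, α ≠ m) (hβZ : ∀ m : ℤ, β ≠ m) (r : ℝ) (hr0 : 0 < r) (hr1 : r < 1) :
    (∫ u in r..(1 - r), (u : ℂ) ^ α * (1 - u : ℂ) ^ β) -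
      (1 - exp (2 * Real.pi * I * α))⁻¹ * loopIntegral α (fun z ↦ (1 - z) ^ β) r +
      (1 - exp (2 * Real.pi * I * β))⁻¹ * -loopIntegral β (fun z ↦ (1 - z) ^ α) r =
      Gamma (α + 1) * Gamma (β + 1) / Gamma (α + β + 2) := by
  have hint {x y : ℝ} (hx : x ∈ Icc (0 : ℝ) 1) (hy : y ∈ Icc (0 : ℝ) 1) :=
    intervalIntegrable_cpow_mul_one_sub_cpow hα hβ hx hy
  have h0 : (0 : ℝ) ∈ Icc (0 : ℝ) 1 := by simp
  have h1 : (1 : ℝ) ∈ Icc (0 : ℝ) 1 := by simp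
  have hr : r ∈ Icc (0 : ℝ) 1 := ⟨hr0.le, hr1.le⟩
  have hr' : 1 - r ∈ Icc (0 : ℝ) 1 := ⟨by linarith, by linarith⟩
  rw [mul_neg, inv_mul_loopIntegral_one_sub_cpow hα hαZ β hr0 hr1,
    inv_mul_loopIntegral_one_sub_cpow hβ hβZ α hr0 hr1, sub_neg_eq_add, neg_neg,
    integral_cpow_mul_one_sub_cpow_reflect α β, add_comm (∫ u in r..(1 - r), _),
    integral_add_adjacent_intervals (hint h0 hr) (hint hr hr'),
    integral_add_adjacent_intervals (hint h0 hr') (hint hr' h1),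
    integral_cpow_mul_one_sub_cpow_eq_Gamma hα hβ]

/-- The regularized Euler beta integral: for non-integral `α, β` with `Re α, Re β > −1`
and `0 < r < 1/2`, the combination of the segment integral `J(r)` and the two circle
integrals `I₀(r)`, `I₁(r)` along circles of radius `r` around `0` and `1` equals
`Γ(α+1)Γ(β+1)/Γ(α+β+2)`; in particular it is independent of `r`. -/
theorem regularized_beta_integral (α β : ℂ) (hα : -1 < α.re) (hβ : -1 < β.re)
    (hαZ : ∀ m : ℤ, α ≠ (m : ℂ)) (hβZ : ∀ m : ℤ, β ≠ (m : ℂ))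
    (r : ℝ) (hr0 : 0 < r) (hr : r < 1 / 2) :
    (∫ u in r..(1 - r), (u : ℂ) ^ α * (((1 - u : ℝ)) : ℂ) ^ β) -
      (1 - Complex.exp (2 * (Real.pi : ℂ) * I * α))⁻¹ *
        (∫ t in (0 : ℝ)..1,
          Complex.exp (α * ((Real.log r : ℂ) + 2 * (Real.pi : ℂ) * I * (t : ℂ))) *
            ((1 : ℂ) - (r : ℂ) * Complex.exp (2 * (Real.pi : ℂ) * I * (t : ℂ))) ^ β *
            (2 * (Real.pi : ℂ) * I * (r : ℂ) *
              Complex.exp (2 * (Real.pi : ℂ) * I * (t : ℂ)))) +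
      (1 - Complex.exp (2 * (Real.pi : ℂ) * I * β))⁻¹ *
        (-(∫ t in (0 : ℝ)..1,
          ((1 : ℂ) - (r : ℂ) * Complex.exp (2 * (Real.pi : ℂ) * I * (t : ℂ))) ^ α *
            Complex.exp (β * ((Real.log r : ℂ) + 2 * (Real.pi : ℂ) * I * (t : ℂ))) *
            (2 * (Real.pi : ℂ) * I * (r : ℂ) *
              Complex.exp (2 * (Real.pi : ℂ) * I * (t : ℂ))))) =
      Complex.Gamma (α + 1) * Complex.Gamma (β + 1) / Complex.Gamma (α + β + 2) := by
  simpa only [loopIntegral, ofReal_sub, ofReal_one, mul_comm (exp (β * _))] using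
    regularized_beta_integral_general α β hα hβ hαZ hβZ r hr0 (by linarith)

end
end

section
/- Let p₊, p₋ be coprime integers with 3 ≤ p₊ < p₋, let r be an integer with 2 ≤ r ≤ p₊ − 1, set α₊ = √(2p₋/p₊), and for ε ∈ ℂ set u(ε) = (α₊+ε)²/2, so that u(0) = p₋/p₊. Let f be a symmetric Laurent polynomial in r−1 variables and let F_{r−1}[f] be the unique analytic continuation of S_{r−1}[f] to ℂ³∖Â_{r−1}. Then there exists an open neighborhood U of 0 in ℂ such that for every ε ∈ U the triple ((1−r)·u(ε), 2u(ε), u(ε)) does not lie in Â_{r−1}, and the function ε ↦ F_{r−1}[f]((1−r)·u(ε), 2u(ε), u(ε)) is analytic on U. -/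
open MeasureTheory Complex

noncomputable section

/-- The ε-deformed parameter `u(ε) = (α₊+ε)²/2` with `α₊ = √(2p₋/p₊)`. -/
def udef (pPlus pMinus : ℕ) (ε : ℂ) : ℂ :=
  (((Real.sqrt (2 * (pMinus : ℝ) / (pPlus : ℝ))) : ℂ) + ε) ^ 2 / 2

/-!
The complement of the arrangement `setAhat (r - 1)` is open, so analyticity near `ε = 0` only
requires that the undeformed triple `((1 - r) u, 2 u, u)`, `u = p₋ / p₊`, avoid the arrangement.
Along such triples every defining linear form becomes an integer multiple `± k u` with
`1 ≤ k ≤ r`, and `k p₋ / p₊` is not an integer because `p₊` is coprime to `p₋` and exceeds `k`.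
-/

theorem isClosed_setOf_eq_intCast {X : Type*} [TopologicalSpace X] {f : X → ℂ}
    (hf : Continuous f) : IsClosed {x | ∃ m : ℤ, f x = m} := by
  have hpre : {x | ∃ m : ℤ, f x = m} = f ⁻¹' Set.range ((↑) : ℤ → ℂ) := by
    ext x
    simp only [Set.mem_ofPred_eq, Set.mem_preimage, Set.mem_range, eq_comm]
  rw [hpre]
  exact isClosed_range_intCast.preimage hf

theorem isClosed_setAhat (n : ℕ) : IsClosed (setAhat n) := by
  have hunion : setAhat n =
      (⋃ j ∈ Set.Icc 1 n,
        {p : ℂ × ℂ × ℂ | ∃ m : ℤ, p.1 + ((j : ℂ) - 1) * p.2.2 = m} ∪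
          {p | ∃ m : ℤ, p.2.1 + ((j : ℂ) - 1) * p.2.2 = m}) ∪
        ⋃ j ∈ Set.Icc 1 (n - 1), {p | ∃ m : ℤ, ((j : ℂ) + 1) * p.2.2 = m} := by
    ext p
    simp only [setAhat, Set.mem_union, Set.mem_iUnion, Set.mem_ofPred_eq, Set.mem_Icc,
      exists_prop, and_assoc]
  rw [hunion]
  refine .union ((Set.finite_Icc 1 n).isClosed_biUnion fun j _ ↦ .union ?_ ?_)
    ((Set.finite_Icc 1 (n - 1)).isClosed_biUnion fun j _ ↦ ?_)
  all_goals exact isClosed_setOf_eq_intCast (by fun_prop)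

theorem natCast_mul_div_ne_intCast {K : Type*} [Field K] [CharZero K] {p q k : ℕ}
    (hpq : p.Coprime q) (hk : 0 < k) (hkp : k < p) (m : ℤ) : (k : K) * (q / p) ≠ m := by
  intro h
  have hp : (p : K) ≠ 0 := Nat.cast_ne_zero.mpr (hk.trans hkp).ne'
  have hcleared : (k : K) * q = p * m := by
    rw [← h]
    field_simp
  have hdvd : (p : ℤ) ∣ ((k * q : ℕ) : ℤ) := ⟨m, by exact_mod_cast hcleared⟩
  have hpk : p ∣ k := hpq.dvd_of_dvd_mul_right (Int.natCast_dvd_natCast.mp hdvd)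
  exact Nat.not_dvd_of_pos_of_lt hk hkp hpk

/-- The Selberg parameters `(α, β, γ) = ((1 - r) u, 2 u, u)` of the screening operator
`Q₊^{[r]}`, as a function of `u = α₊² / 2`. -/
def screeningParameters (r : ℕ) (u : ℂ) : ℂ × ℂ × ℂ :=
  ((1 - (r : ℂ)) * u, 2 * u, u)

theorem differentiable_screeningParameters (r : ℕ) :
    Differentiable ℂ (screeningParameters r) := by
  unfold screeningParameters
  fun_prop

theorem screeningParameters_mem_setAhat_iff {r : ℕ} (hr : 2 ≤ r) {u : ℂ} :
    screeningParameters r u ∈ setAhat (r - 1) ↔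
      ∃ k : ℕ, 0 < k ∧ k ≤ r ∧ ∃ m : ℤ, (k : ℂ) * u = m := by
  simp only [screeningParameters, setAhat, Set.mem_ofPred_eq]
  constructor
  · rintro (⟨j, hj, hjr, ⟨m, hα⟩ | ⟨m, hβ⟩⟩ | ⟨j, hj, hjr, m, hγ⟩)
    · refine ⟨r - j, by omega, by omega, -m, ?_⟩
      push_cast [Nat.cast_sub (show j ≤ r by omega)]
      linear_combination -hα
    · refine ⟨j + 1, by omega, by omega, m, ?_⟩
      push_cast
      linear_combination hβ
    · exact ⟨j + 1, by omega, by omega, m, by exact_mod_cast hγ⟩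
  · rintro ⟨k, hk, hkr, m, hm⟩
    rcases hkr.lt_or_eq with hlt | rfl
    · refine .inl ⟨r - k, by omega, by omega, .inl ⟨-m, ?_⟩⟩
      push_cast [Nat.cast_sub hkr]
      linear_combination -hm
    · refine .inl ⟨k - 1, by omega, le_rfl, .inr ⟨m, ?_⟩⟩
      push_cast [Nat.cast_sub (show 1 ≤ k by omega)]
      linear_combination hm

theorem screeningParameters_div_notMem_setAhat {p q r : ℕ} (hpq : p.Coprime q) (hr : 2 ≤ r)
    (hrp : r < p) : screeningParameters r ((q : ℂ) / p) ∉ setAhat (r - 1) := by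
  rw [screeningParameters_mem_setAhat_iff hr]
  rintro ⟨k, hk, hkr, m, hm⟩
  exact natCast_mul_div_ne_intCast hpq hk (hkr.trans_lt hrp) m hm

theorem udef_zero (p q : ℕ) : udef p q 0 = (q : ℂ) / p := by
  have hnonneg : (0 : ℝ) ≤ 2 * q / p := by positivity
  rw [udef, add_zero, ← ofReal_pow, Real.sq_sqrt hnonneg]
  push_cast
  ring

theorem differentiable_udef (p q : ℕ) : Differentiable ℂ (udef p q) := by
  unfold udef
  fun_prop

theorem deformed_plus_screening_parameters_analytic_general {E : Type*}
    [NormedAddCommGroup E] [NormedSpace ℂ E] {p q r : ℕ} (hpq : p.Coprime q) (hr : 2 ≤ r)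
    (hrp : r < p) {F : ℂ × ℂ × ℂ → E} (hF : AnalyticOnNhd ℂ F (setAhat (r - 1))ᶜ) :
    ∃ U : Set ℂ, IsOpen U ∧ 0 ∈ U ∧
      (∀ ε ∈ U, screeningParameters r (udef p q ε) ∉ setAhat (r - 1)) ∧
      AnalyticOnNhd ℂ (fun ε ↦ F (screeningParameters r (udef p q ε))) U := by
  have hparams : Differentiable ℂ fun ε ↦ screeningParameters r (udef p q ε) :=
    (differentiable_screeningParameters r).comp (differentiable_udef p q)
  refine ⟨(fun ε ↦ screeningParameters r (udef p q ε)) ⁻¹' (setAhat (r - 1))ᶜ,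
    (isClosed_setAhat _).isOpen_compl.preimage hparams.continuous, ?_, fun _ hε ↦ hε,
    hF.comp (fun ε _ ↦ hparams.analyticAt ε) (Set.mapsTo_preimage _ _)⟩
  rw [Set.mem_preimage, udef_zero]
  exact screeningParameters_div_notMem_setAhat hpq hr hrp

/-- Analyticity in ε of the continued Selberg integral along the deformed parameters of
the screening operator `Q̃₊^{[r]}`. -/
theorem deformed_plus_screening_parameters_analytic (pPlus pMinus : ℕ)
    (hcop : Nat.Coprime pPlus pMinus) (hp : 3 ≤ pPlus) (hlt : pPlus < pMinus)
    (r : ℕ) (hr2 : 2 ≤ r) (hr : r ≤ pPlus - 1)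
    (c : (Fin (r - 1) → ℤ) →₀ ℂ) (d : ℕ)
    (hd : ∀ k ∈ c.support, ∀ i, -(d : ℤ) ≤ k i)
    (hsym : ∀ (σ : Equiv.Perm (Fin (r - 1))) (y : Fin (r - 1) → ℝ),
      laurentEval c (y ∘ σ) = laurentEval c y)
    (F : ℂ × ℂ × ℂ → ℂ)
    (hF : AnalyticOnNhd ℂ F (setAhat (r - 1))ᶜ)
    (hFS : ∀ p : ℂ × ℂ × ℂ, p ∉ setAhat (r - 1) →
      (d : ℝ) - 1 < p.1.re → -1 < p.2.1.re → 0 < p.2.2.re →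
      F p = selbergS (r - 1) (laurentEval c) p.1 p.2.1 p.2.2) :
    ∃ U : Set ℂ, IsOpen U ∧ (0 : ℂ) ∈ U ∧
      (∀ ε ∈ U,
        ((1 - (r : ℂ)) * udef pPlus pMinus ε, 2 * udef pPlus pMinus ε,
          udef pPlus pMinus ε) ∉ setAhat (r - 1)) ∧
      AnalyticOnNhd ℂ
        (fun ε : ℂ =>
          F ((1 - (r : ℂ)) * udef pPlus pMinus ε, 2 * udef pPlus pMinus ε,
            udef pPlus pMinus ε)) U := by
  exact deformed_plus_screening_parameters_analytic_general hcop hr2 (by omega) hF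

end
end
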